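/- Let p, q ≥ 2 be integers such that p^r ≠ q^s for all positive integers r and s (equivalently, log p / log q is irrational). Then the set of real numbers x ∈ [0,1) that are normal to base p but not simply normal to base q has the cardinality of the continuum (Schmidt, part 2). -/

import Mathlib

open Filter MeasureTheory Topology
open scoped Classical

/-- The `(n+1)`-st digit (i.e. `ε_{n+1}`, `0`-indexed by `n`) of the base-`q` expansion of `x`,
chosen as the greedy expansion (never eventually equal to `q - 1`). -/
noncomputable def qdigit (q : ℕ) (x : ℝ) (n : ℕ) : ℕ :=
  (⌊x * (q : ℝ) ^ (n + 1)⌋).toNat % q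

/-- `x` is normal to base `q`: every word `d` of length `m ≥ 1` over `{0, …, q-1}` occurs in the
base-`q` digit sequence of `x` with frequency `q^{-m}`. -/
def IsNormal (q : ℕ) (x : ℝ) : Prop :=
  ∀ m : ℕ, 0 < m → ∀ d : Fin m → ℕ, (∀ i, d i < q) →
    Tendsto
      (fun N : ℕ =>
        (((Finset.range N).filter fun n =>
          ∀ i : Fin m, qdigit q x (n + (i : ℕ)) = d i).card : ℝ) / N)
      atTop (𝓝 (((q : ℝ) ^ m)⁻¹))

/-- `x` is simply normal to base `q`: every digit `d ∈ {0, …, q-1}` occurs in the base-`q` digit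
sequence of `x` with frequency `1/q`. -/
def IsSimplyNormal (q : ℕ) (x : ℝ) : Prop :=
  ∀ d : ℕ, d < q →
    Tendsto
      (fun N : ℕ => (((Finset.range N).filter fun n => qdigit q x n = d).card : ℝ) / N)
      atTop (𝓝 ((q : ℝ)⁻¹))



theorem weyl_abs {ι : Type*} (l : Filter ι) (s : ι → Finset ℕ) (y : ℕ → UnitAddCircle)
    (hs : ∀ᶠ i in l, (s i).Nonempty)
    (hk : ∀ k : ℤ, k ≠ 0 →
      Tendsto (fun i => (∑ n ∈ s i, fourier k (y n)) / ((s i).card : ℂ)) l (𝓝 0))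
    (f : C(UnitAddCircle, ℂ)) :
    Tendsto (fun i => (∑ n ∈ s i, f (y n)) / ((s i).card : ℂ)) l (𝓝 (∫ t, f t)) := by
  have hspan : ∀ g ∈ Submodule.span ℂ (Set.range (@fourier 1)),
      Tendsto (fun i => (∑ n ∈ s i, g (y n)) / ((s i).card : ℂ)) l (𝓝 (∫ t : UnitAddCircle, g t)) := by
    intro g hg
    induction hg using Submodule.span_induction with
    | mem g hg =>
      obtain ⟨k, rfl⟩ := hg
      by_cases h0 : k = 0
      · subst h0
        have h1 : (∫ t : UnitAddCircle, (fourier 0 : C(UnitAddCircle, ℂ)) t) = 1 := by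
          simp [Measure.real]
        rw [h1]
        apply tendsto_const_nhds.congr'
        filter_upwards [hs] with i hi
        have : ((s i).card : ℂ) ≠ 0 := by exact_mod_cast hi.card_pos.ne'
        simp [this]
      · have h1 : (∫ t : UnitAddCircle, (fourier k : C(UnitAddCircle, ℂ)) t) = 0 := by
          have := fourierCoeff_fourier (T := 1) k
          have h2 := congrFun this 0
          rw [fourierCoeff] at h2
          simp only [neg_zero, fourier_zero, one_smul] at h2
          rw [Pi.single_eq_of_ne (Ne.symm h0)] at h2
          rw [AddCircle.volume_eq_smul_haarAddCircle]
          simpa using h2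
        rw [h1]
        exact hk k h0
    | zero => simpa using tendsto_const_nhds
    | add g₁ g₂ _ _ h1 h2 =>
      have : (∫ t : UnitAddCircle, (g₁ + g₂) t) = (∫ t : UnitAddCircle, g₁ t) + ∫ t : UnitAddCircle, g₂ t := by
        simp only [ContinuousMap.add_apply]
        exact integral_add (g₁.continuous.integrable_of_hasCompactSupport (HasCompactSupport.of_compactSpace _))
          (g₂.continuous.integrable_of_hasCompactSupport (HasCompactSupport.of_compactSpace _))
      rw [this]
      refine (h1.add h2).congr fun i => ?_
      simp [Finset.sum_add_distrib, add_div]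
    | smul c g _ h1 =>
      have : (∫ t : UnitAddCircle, (c • g) t) = c * (∫ t : UnitAddCircle, g t) := by
        simp only [ContinuousMap.smul_apply, smul_eq_mul]
        exact integral_const_mul _ _
      rw [this]
      refine (h1.const_mul c).congr fun i => ?_
      simp only [ContinuousMap.smul_apply, smul_eq_mul]
      rw [← Finset.mul_sum, mul_div_assoc]
  rw [Metric.tendsto_nhds]
  intro ε hε
  have hf : f ∈ (Submodule.span ℂ (Set.range (@fourier 1))).topologicalClosure := by
    rw [span_fourier_closure_eq_top]; trivial
  have hf' : f ∈ closure ((Submodule.span ℂ (Set.range (@fourier 1)) : Submodule ℂ C(UnitAddCircle, ℂ)) : Set C(UnitAddCircle, ℂ)) := hf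
  obtain ⟨g, hg, hfg⟩ := Metric.mem_closure_iff.1 hf' (ε / 3) (by positivity)
  have hpt : ∀ t, ‖f t - g t‖ ≤ ε / 3 := by
    intro t
    rw [← dist_eq_norm]
    exact (ContinuousMap.dist_apply_le_dist t).trans hfg.le
  have h2 := (Metric.tendsto_nhds.1 (hspan g hg)) (ε / 3) (by positivity)
  filter_upwards [h2, hs] with i hi hsi
  have hc : (0 : ℝ) < (s i).card := by exact_mod_cast hsi.card_pos
  have e1 : ‖(∑ n ∈ s i, f (y n)) / ((s i).card : ℂ) - (∑ n ∈ s i, g (y n)) / ((s i).card : ℂ)‖ ≤ ε / 3 := by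
    rw [← sub_div, ← Finset.sum_sub_distrib, norm_div, Complex.norm_natCast, div_le_iff₀ hc]
    refine (norm_sum_le _ _).trans ?_
    refine (Finset.sum_le_card_nsmul _ _ (ε / 3) (fun n _ => hpt _)).trans ?_
    simp [mul_comm]
  have e2 : ‖(∫ t : UnitAddCircle, g t) - ∫ t : UnitAddCircle, f t‖ ≤ ε / 3 := by
    rw [← integral_sub (g.continuous.integrable_of_hasCompactSupport (HasCompactSupport.of_compactSpace _))
          (f.continuous.integrable_of_hasCompactSupport (HasCompactSupport.of_compactSpace _))]
    refine (norm_integral_le_of_norm_le_const (C := ε / 3) ?_).trans ?_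
    · refine Eventually.of_forall fun t => ?_
      rw [norm_sub_rev]; exact hpt t
    · simp [Measure.real]
  rw [dist_eq_norm] at hi ⊢
  calc _ = ‖((∑ n ∈ s i, f (y n)) / ((s i).card : ℂ) - (∑ n ∈ s i, g (y n)) / ((s i).card : ℂ))
      + ((∑ n ∈ s i, g (y n)) / ((s i).card : ℂ) - ∫ t : UnitAddCircle, g t)
      + ((∫ t : UnitAddCircle, g t) - ∫ t : UnitAddCircle, f t)‖ := by congr 1; ring
    _ ≤ _ := norm_add₃_le
    _ < ε := by linarith

theorem weyl_abs_real {ι : Type*} (l : Filter ι) (s : ι → Finset ℕ) (y : ℕ → UnitAddCircle)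
    (hs : ∀ᶠ i in l, (s i).Nonempty)
    (hk : ∀ k : ℤ, k ≠ 0 →
      Tendsto (fun i => (∑ n ∈ s i, fourier k (y n)) / ((s i).card : ℂ)) l (𝓝 0))
    (f : C(UnitAddCircle, ℝ)) :
    Tendsto (fun i => (∑ n ∈ s i, f (y n)) / ((s i).card : ℝ)) l (𝓝 (∫ t, f t)) := by
  have := weyl_abs l s y hs hk ⟨fun t => (f t : ℂ), by fun_prop⟩
  simp only [ContinuousMap.coe_mk] at this
  have h2 := (Complex.continuous_re.tendsto _).comp this
  rw [integral_complex_ofReal, Complex.ofReal_re] at h2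
  refine h2.congr fun i => ?_
  simp only [Function.comp]
  rw [← Complex.ofReal_sum, ← Complex.ofReal_natCast, ← Complex.ofReal_div, Complex.ofReal_re]

/-- uniform equidistribution of irrational rotations -/
theorem rot_equi (α : ℝ) (hα : ∀ k : ℤ, k ≠ 0 → ∀ m : ℤ, k * α ≠ m) (f : C(UnitAddCircle, ℝ))
    (ε : ℝ) (hε : 0 < ε) :
    ∃ L0 : ℕ, ∀ L ≥ L0, ∀ M : ℕ,
      (∑ n ∈ Finset.Ico M (M + L), f ((n * α : ℝ) : UnitAddCircle)) ≤ ((∫ t, f t) + ε) * L := by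
  have key := weyl_abs_real ((⊤ : Filter ℕ) ×ˢ (atTop : Filter ℕ))
    (fun i => Finset.Ico i.1 (i.1 + i.2)) (fun n => ((n * α : ℝ) : UnitAddCircle)) ?_ ?_ f
  · have h1 := key.eventually (gt_mem_nhds (show (∫ t, f t) < (∫ t, f t) + ε by linarith))
    rw [eventually_prod_iff] at h1
    obtain ⟨pa, hpa, pb, hpb, h⟩ := h1
    rw [eventually_top] at hpa
    obtain ⟨L0, hL0⟩ := eventually_atTop.1 hpb
    refine ⟨L0 + 1, fun L hL M => ?_⟩
    have h3 := h (hpa M) (hL0 L (by omega))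
    simp only [Nat.card_Ico, add_tsub_cancel_left] at h3
    have hLpos : (0 : ℝ) < L := by exact_mod_cast (by omega : 0 < L)
    rw [div_lt_iff₀ hLpos] at h3
    exact h3.le
  · have : ∀ᶠ i : ℕ × ℕ in (⊤ : Filter ℕ) ×ˢ (atTop : Filter ℕ), 0 < i.2 :=
      tendsto_snd.eventually (eventually_gt_atTop 0)
    filter_upwards [this] with i hi
    simpa using hi
  · intro k hk
    set w : ℂ := fourier k ((α : ℝ) : UnitAddCircle) with hw
    have hwn : ∀ n : ℕ, fourier k ((n * α : ℝ) : UnitAddCircle) = w ^ n := by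
      intro n
      rw [hw, fourier_coe_apply, fourier_coe_apply, ← Complex.exp_nat_mul]
      congr 1
      push_cast
      ring
    have hw1 : w ≠ 1 := by
      rw [hw, fourier_coe_apply]
      intro h
      rw [Complex.exp_eq_one_iff] at h
      obtain ⟨m, hm⟩ := h
      apply hα k hk m
      have h2pi : (2 * Real.pi * Complex.I : ℂ) ≠ 0 := by simp [Real.pi_ne_zero]
      have : (2 * Real.pi * Complex.I : ℂ) * ((k * α : ℝ) : ℂ) = (2 * Real.pi * Complex.I) * ((m : ℝ) : ℂ) := by
        push_cast at hm ⊢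
        rw [div_one] at hm
        linear_combination hm
      have := mul_left_cancel₀ h2pi this
      exact_mod_cast this
    have hwn1 : ‖w‖ = 1 := by
      rw [hw, fourier_apply]; exact Circle.norm_coe _
    have hd : 0 < ‖w - 1‖ := norm_pos_iff.2 (sub_ne_zero.2 hw1)
    have hlim : Tendsto (fun i : ℕ × ℕ => (2 / ‖w - 1‖) / (i.2 : ℝ)) ((⊤ : Filter ℕ) ×ˢ (atTop : Filter ℕ)) (𝓝 0) :=
      (tendsto_const_div_atTop_nhds_zero_nat _).comp tendsto_snd
    refine squeeze_zero_norm (fun i => ?_) hlim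
    rw [norm_div, Complex.norm_natCast]
    simp only [Nat.card_Ico, add_tsub_cancel_left, hwn]
    gcongr
    rw [geom_sum_Ico hw1 (by omega), norm_div]
    gcongr
    refine (norm_sub_le _ _).trans ?_
    simp [hwn1]; norm_num


theorem tendsto_of_sum_one (P : ℕ) (hP : 0 < P) (F : ℕ → ℕ → ℝ)
    (hsum : ∀ᶠ N in atTop, ∑ D ∈ Finset.range P, F D N = 1)
    (hup : ∀ D < P, ∀ ε > 0, ∀ᶠ N in atTop, F D N ≤ (P : ℝ)⁻¹ + ε)
    (D : ℕ) (hD : D < P) : Tendsto (F D) atTop (𝓝 ((P : ℝ)⁻¹)) := by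
  have hP' : (0 : ℝ) < P := by exact_mod_cast hP
  rw [Metric.tendsto_nhds]
  intro ε hε
  have hall : ∀ᶠ N in atTop, ∀ D ∈ Finset.range P, F D N ≤ (P : ℝ)⁻¹ + ε / (2 * P) := by
    rw [Filter.eventually_all_finset]
    intro D hD
    exact hup D (Finset.mem_range.1 hD) _ (by positivity)
  filter_upwards [hsum, hall] with N h1 h2
  have hlow : ∑ E ∈ (Finset.range P).erase D, F E N ≤ ∑ E ∈ (Finset.range P).erase D, ((P : ℝ)⁻¹ + ε / (2 * P)) :=
    Finset.sum_le_sum fun E hE => h2 E (Finset.mem_of_mem_erase hE)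
  rw [← Finset.add_sum_erase _ _ (Finset.mem_range.2 hD)] at h1
  have hconst : F D N + ∑ E ∈ (Finset.range P).erase D, ((P : ℝ)⁻¹ + ε / (2 * P)) =
      F D N - ((P : ℝ)⁻¹ + ε / (2 * P)) + ∑ E ∈ (Finset.range P), ((P : ℝ)⁻¹ + ε / (2 * P)) := by
    rw [← Finset.add_sum_erase (Finset.range P) _ (Finset.mem_range.2 hD)]; ring
  have hc2 : ∑ E ∈ (Finset.range P), ((P : ℝ)⁻¹ + ε / (2 * P)) = P * ((P : ℝ)⁻¹ + ε / (2 * P)) := by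
    rw [Finset.sum_const, Finset.card_range, nsmul_eq_mul]
  rw [hc2] at hconst
  have e1 : (P : ℝ) * ((P : ℝ)⁻¹ + ε / (2 * P)) = 1 + ε / 2 := by field_simp
  have e2 := h2 D (Finset.mem_range.2 hD)
  have e3 : ε / (2 * P) ≤ ε / 2 := by
    apply div_le_div_of_nonneg_left hε.le (by norm_num)
    have : (1 : ℝ) ≤ P := by exact_mod_cast hP
    linarith
  have e4 : 0 < ε / (2 * P) := by positivity
  rw [Real.dist_eq, abs_lt]
  constructor <;> linarith

theorem word_iff (p : ℕ) (m : ℕ) : ∀ d : ℕ → ℕ, (∀ i < m, d i < p) → ∃ D < p ^ m, ∀ z : ℝ, 0 ≤ z →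
    ((∀ i < m, ⌊z * (p : ℝ) ^ (i + 1)⌋₊ % p = d i) ↔ ⌊z * (p : ℝ) ^ m⌋₊ % p ^ m = D) := by
  induction m with
  | zero => intro d _; exact ⟨0, by simp, fun z _ => by simp [Nat.mod_one]⟩
  | succ m ih =>
    intro d hd
    obtain ⟨D, hD, h⟩ := ih d (fun i hi => hd i (by omega))
    have hdm := hd m (by omega)
    have hp0 : 0 < p := by omega
    refine ⟨p * D + d m, ?_, fun z hz => ?_⟩
    · have : p * (D + 1) ≤ p * p ^ m := Nat.mul_le_mul_left _ hD
      rw [pow_succ]; nlinarith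
    have e : ⌊z * (p : ℝ) ^ m⌋₊ = ⌊z * (p : ℝ) ^ (m + 1)⌋₊ / p := by
      rw [← Nat.floor_div_natCast]
      congr 1
      have : (p : ℝ) ≠ 0 := by exact_mod_cast hp0.ne'
      field_simp
      ring
    have e2 : ⌊z * (p : ℝ) ^ (m + 1)⌋₊ % p ^ (m + 1) =
        p * (⌊z * (p : ℝ) ^ m⌋₊ % p ^ m) + ⌊z * (p : ℝ) ^ (m + 1)⌋₊ % p := by
      rw [pow_succ' p m, Nat.mod_mul, e, add_comm]
    rw [e2]
    have hm1 : ⌊z * (p : ℝ) ^ (m + 1)⌋₊ % p < p := Nat.mod_lt _ hp0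
    constructor
    · intro h3
      rw [(h z hz).1 (fun i hi => h3 i (by omega)), h3 m (by omega)]
    · intro h3
      have h4 : ⌊z * (p : ℝ) ^ m⌋₊ % p ^ m = D := by
        have := congrArg (· / p) h3
        simpa [Nat.mul_add_div hp0, Nat.div_eq_of_lt hm1, Nat.div_eq_of_lt hdm] using this
      have h5 : ⌊z * (p : ℝ) ^ (m + 1)⌋₊ % p = d m := by
        rw [h4] at h3; omega
      intro i hi
      rcases Nat.lt_succ_iff_lt_or_eq.1 hi with h6 | rfl
      · exact (h z hz).2 h4 i h6
      · exact h5

theorem arc_upper (y : ℕ → ℝ)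
    (hk : ∀ k : ℤ, k ≠ 0 →
      Tendsto (fun N : ℕ => (∑ n ∈ Finset.range N, fourier k (y n : UnitAddCircle)) / (N : ℂ)) atTop (𝓝 0))
    (c r : ℝ) (ε : ℝ) (hε : 0 < ε) (S : ℕ → Prop) (hr : 0 ≤ r)
    (hS : ∀ n, S n → ∃ j : ℤ, |y n - c - j| ≤ r) :
    ∀ᶠ N : ℕ in atTop, (((Finset.range N).filter S).card : ℝ) / N ≤ 2 * r + ε := by
  set δ := ε / 4 with hδ
  have hδ0 : 0 < δ := by positivity
  let f : C(UnitAddCircle, ℝ) := ⟨fun t => max 0 (min 1 (1 - (‖t - (c : UnitAddCircle)‖ - r) / δ)), by fun_prop⟩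
  have hf0 : ∀ t, 0 ≤ f t := fun t => le_max_left _ _
  have hf1 : ∀ t, ‖t - (c : UnitAddCircle)‖ ≤ r → f t = 1 := by
    intro t ht
    have : 0 ≤ -((‖t - (c : UnitAddCircle)‖ - r) / δ) := by
      rw [← neg_div]; apply div_nonneg _ hδ0.le; linarith
    have h2 : min 1 (1 - (‖t - (c : UnitAddCircle)‖ - r) / δ) = 1 := min_eq_left (by linarith)
    show max 0 (min 1 (1 - (‖t - (c : UnitAddCircle)‖ - r) / δ)) = 1
    rw [h2]; norm_num
  have hfint : (∫ t, f t) ≤ 2 * (r + δ) := by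
    have h1 : ∀ t, f t ≤ (Metric.closedBall (c : UnitAddCircle) (r + δ)).indicator (fun _ => (1 : ℝ)) t := by
      intro t
      by_cases ht : t ∈ Metric.closedBall (c : UnitAddCircle) (r + δ)
      · rw [Set.indicator_of_mem ht]
        exact max_le (by norm_num) (min_le_left _ _)
      · rw [Set.indicator_of_notMem ht]
        rw [Metric.mem_closedBall, dist_eq_norm, not_le] at ht
        refine max_le le_rfl ((min_le_right _ _).trans ?_)
        have : 1 ≤ (‖t - (c : UnitAddCircle)‖ - r) / δ := by
          rw [le_div_iff₀ hδ0]; linarith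
        linarith
    have h2 : (∫ t, f t) ≤ ∫ t, (Metric.closedBall (c : UnitAddCircle) (r + δ)).indicator (fun _ => (1 : ℝ)) t := by
      apply integral_mono
      · exact f.continuous.integrable_of_hasCompactSupport (HasCompactSupport.of_compactSpace _)
      · exact (integrable_const _).indicator measurableSet_closedBall
      · exact h1
    refine h2.trans ?_
    rw [integral_indicator_const _ measurableSet_closedBall]
    simp only [smul_eq_mul, mul_one, Measure.real]
    have := AddCircle.volume_closedBall (T := 1) (x := (c : UnitAddCircle)) (r + δ)
    rw [this, ENNReal.toReal_ofReal]
    · exact min_le_right _ _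
    · apply le_min <;> positivity
  have key := weyl_abs_real atTop (fun N => Finset.range N) (fun n => (y n : UnitAddCircle))
    (by filter_upwards [eventually_gt_atTop 0] with N hN; simpa using hN.ne')
    (by simpa using hk) f
  have h1 := key.eventually (gt_mem_nhds (show (∫ t, f t) < 2 * r + ε by linarith))
  filter_upwards [h1, eventually_gt_atTop 0] with N h2 hN
  refine le_trans ?_ h2.le
  simp only [Finset.card_range]
  gcongr
  rw [Finset.card_filter]
  push_cast
  refine Finset.sum_le_sum fun n _ => ?_
  split_ifs with hSn
  · obtain ⟨j, hj⟩ := hS n hSn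
    rw [hf1]
    have e : ((y n : ℝ) : UnitAddCircle) - (c : UnitAddCircle) = ((y n - c - j : ℝ) : UnitAddCircle) := by
      rw [AddCircle.coe_sub, AddCircle.coe_sub]
      have : ((j : ℝ) : UnitAddCircle) = 0 := by
        rw [AddCircle.coe_eq_zero_iff]
        exact ⟨j, by simp⟩
      rw [this, sub_zero]
    rw [e]
    refine le_trans ?_ hj
    exact QuotientAddGroup.norm_mk_le_norm
  · exact hf0 _

theorem normal_of_weyl (p : ℕ) (hp : 2 ≤ p) (x : ℝ) (hx : 0 ≤ x)
    (hk : ∀ k : ℤ, k ≠ 0 →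
      Tendsto (fun N : ℕ => (∑ n ∈ Finset.range N, fourier k ((x * (p : ℝ) ^ n : ℝ) : UnitAddCircle)) / (N : ℂ))
        atTop (𝓝 0)) : IsNormal p x := by
  intro m hm d hd
  have hp0 : (0 : ℝ) < p := by positivity
  obtain ⟨D, hD, hDz⟩ := word_iff p m (fun i => if h : i < m then d ⟨i, h⟩ else 0)
    (fun i hi => by simpa [hi] using hd ⟨i, hi⟩)
  have heq : ∀ n : ℕ, (∀ i : Fin m, qdigit p x (n + (i : ℕ)) = d i) ↔
      ⌊x * (p : ℝ) ^ n * (p : ℝ) ^ m⌋₊ % p ^ m = D := by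
    intro n
    rw [← hDz (x * (p : ℝ) ^ n) (by positivity)]
    constructor
    · intro h i hi
      have := h ⟨i, hi⟩
      simp only [hi, dif_pos]
      rw [← this, qdigit, Int.floor_toNat]
      rw [show x * (p : ℝ) ^ n * (p : ℝ) ^ (i + 1) = x * (p : ℝ) ^ (n + i + 1) by ring]
    · intro h i
      have := h i i.2
      simp only [i.2, dif_pos] at this
      rw [← this, qdigit, Int.floor_toNat]
      rw [show x * (p : ℝ) ^ n * (p : ℝ) ^ ((i : ℕ) + 1) = x * (p : ℝ) ^ (n + (i : ℕ) + 1) by ring]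
  simp only [heq]
  have hPm : 0 < p ^ m := by positivity
  have := tendsto_of_sum_one (p ^ m) hPm
    (fun D N => (((Finset.range N).filter fun n => ⌊x * (p : ℝ) ^ n * (p : ℝ) ^ m⌋₊ % p ^ m = D).card : ℝ) / N)
    ?_ ?_ D hD
  · simpa using this
  · filter_upwards [eventually_gt_atTop 0] with N hN
    rw [← Finset.sum_div, ← Nat.cast_sum, ← Finset.card_eq_sum_card_fiberwise]
    · simp [hN.ne']
    · intro n _
      simpa using Nat.mod_lt _ hPm
  · intro D hD ε hε
    have hP0 : (0 : ℝ) < (p ^ m : ℕ) := by exact_mod_cast hPm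
    have := arc_upper (fun n => x * (p : ℝ) ^ n) hk ((D + 1 / 2) / (p ^ m : ℕ)) ((1 / 2) / (p ^ m : ℕ)) ε hε
      (fun n => ⌊x * (p : ℝ) ^ n * (p : ℝ) ^ m⌋₊ % p ^ m = D) (by positivity) ?_
    · have e : 2 * ((1 / 2 : ℝ) / (p ^ m : ℕ)) = ((p ^ m : ℕ) : ℝ)⁻¹ := by field_simp
      rw [e] at this
      filter_upwards [this] with N hN
      convert hN
    · intro n hn
      set W := ⌊x * (p : ℝ) ^ n * (p : ℝ) ^ m⌋₊ with hW
      refine ⟨(W / p ^ m : ℕ), ?_⟩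
      have hdm : p ^ m * (W / p ^ m) + D = W := by rw [← hn]; exact Nat.div_add_mod _ _
      have hdm' : ((p ^ m : ℕ) : ℝ) * ((W / p ^ m : ℕ) : ℝ) + D = W := by exact_mod_cast hdm
      have h1 : (W : ℝ) ≤ x * (p : ℝ) ^ n * (p : ℝ) ^ m := Nat.floor_le (by positivity)
      have h2 : x * (p : ℝ) ^ n * (p : ℝ) ^ m < W + 1 := Nat.lt_floor_add_one _
      have hcast : (p : ℝ) ^ m = ((p ^ m : ℕ) : ℝ) := by push_cast; rfl
      rw [hcast] at h1 h2
      generalize ((p ^ m : ℕ) : ℝ) = R at *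
      have e : x * (p : ℝ) ^ n - (D + 1 / 2) / R - (((W / p ^ m : ℕ) : ℤ) : ℝ) =
        (x * (p : ℝ) ^ n * R - W - 1 / 2) / R := by
        rw [← hdm', Int.cast_natCast]; field_simp; ring
      rw [e, abs_div, abs_of_pos hP0]
      gcongr
      rw [abs_le]; constructor <;> linarith


noncomputable def FF (Q D : ℕ) (v : ℝ) : ℝ := ∏ i ∈ Finset.range D, |Real.cos (Real.pi * ((Q : ℝ) ^ i * v))|

theorem FF_nonneg (Q D : ℕ) (v : ℝ) : 0 ≤ FF Q D v := Finset.prod_nonneg fun _ _ => abs_nonneg _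

theorem FF_cont (Q D : ℕ) : Continuous (FF Q D) := by unfold FF; fun_prop

theorem FF_periodic (Q D : ℕ) : Function.Periodic (FF Q D) 1 := by
  intro v
  unfold FF
  refine Finset.prod_congr rfl fun i _ => ?_
  have : Real.pi * ((Q : ℝ) ^ i * (v + 1)) = Real.pi * ((Q : ℝ) ^ i * v) + (Q ^ i : ℕ) * Real.pi := by
    push_cast; ring
  rw [this, Real.cos_add_nat_mul_pi, abs_mul, abs_pow, abs_neg, abs_one, one_pow, one_mul]

theorem FF_add_nat (Q D : ℕ) (v : ℝ) (j : ℕ) : FF Q D (v + j) = FF Q D v := by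
  simpa using (FF_periodic Q D).nat_mul j v

theorem FF_nat (Q D j : ℕ) : FF Q D j = 1 := by
  have := FF_add_nat Q D 0 j
  rw [zero_add] at this
  rw [this]; simp [FF]

theorem FF_succ (Q D : ℕ) (v : ℝ) : FF Q (D + 1) v = |Real.cos (Real.pi * v)| * FF Q D (Q * v) := by
  unfold FF
  rw [Finset.prod_range_succ', mul_comm]
  congr 1
  · simp
  · refine Finset.prod_congr rfl fun i _ => ?_
    congr 2; ring

theorem sum_cos_zero (Q : ℕ) (hQ : 2 ≤ Q) (w : ℝ) :
    ∑ j ∈ Finset.range Q, Real.cos (2 * (Real.pi * ((w + j) / Q))) = 0 := by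
  have hQ0 : (Q : ℂ) ≠ 0 := by exact_mod_cast (by omega : Q ≠ 0)
  have hprim := Complex.isPrimitiveRoot_exp Q (by omega)
  have hz := hprim.geom_sum_eq_zero (by omega)
  have : ∀ j ∈ Finset.range Q, Real.cos (2 * (Real.pi * ((w + j) / Q))) =
      (Complex.exp (2 * Real.pi * Complex.I * w / Q) * Complex.exp (2 * Real.pi * Complex.I / Q) ^ j).re := by
    intro j _
    rw [← Complex.exp_nat_mul, ← Complex.exp_add]
    have : (2 * Real.pi * Complex.I * w / Q + j * (2 * Real.pi * Complex.I / Q) : ℂ) =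
      ((2 * (Real.pi * ((w + j) / Q)) : ℝ) : ℂ) * Complex.I := by
      push_cast; field_simp
    rw [this, Complex.exp_ofReal_mul_I_re]
  rw [Finset.sum_congr rfl this, ← Complex.re_sum, ← Finset.mul_sum, hz]
  simp

theorem sum_abs_cos (Q : ℕ) (hQ : 2 ≤ Q) (w : ℝ) :
    ∑ j ∈ Finset.range Q, |Real.cos (Real.pi * ((w + j) / Q))| ≤ 17 / 24 * Q := by
  have h1 : ∀ j ∈ Finset.range Q, |Real.cos (Real.pi * ((w + j) / Q))| ≤
      17 / 24 + 1 / 3 * Real.cos (2 * (Real.pi * ((w + j) / Q))) := by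
    intro j _
    rw [Real.cos_two_mul]
    generalize Real.cos (Real.pi * ((w + j) / Q)) = c
    rw [← sq_abs c]
    nlinarith [sq_nonneg (|c| - 3 / 4)]
  refine (Finset.sum_le_sum h1).trans ?_
  rw [Finset.sum_add_distrib, ← Finset.mul_sum, sum_cos_zero Q hQ]
  simp [mul_comm]

theorem FF_int (Q : ℕ) (hQ : 2 ≤ Q) (D : ℕ) : ∫ v in (0 : ℝ)..1, FF Q D v ≤ (17 / 24) ^ D := by
  induction D with
  | zero => simp [FF]
  | succ D ih =>
    have hQ0 : (0 : ℝ) < Q := by positivity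
    let g : ℝ → ℝ := fun w => |Real.cos (Real.pi * (w / Q))| * FF Q D w
    have hg : Continuous g := by
      have := FF_cont Q D
      fun_prop
    have e1 : ∫ v in (0 : ℝ)..1, FF Q (D + 1) v = ∫ v in (0 : ℝ)..1, g (Q * v) := by
      congr 1; ext v
      rw [FF_succ]
      simp only [g]
      rw [mul_div_cancel_left₀ _ hQ0.ne']
    have e2 : ∫ w in (0 : ℝ)..Q, g w = ∑ j ∈ Finset.range Q, ∫ w in (j : ℝ)..((j + 1 : ℕ) : ℝ), g w := by
      rw [intervalIntegral.sum_integral_adjacent_intervals (a := fun j : ℕ => (j : ℝ))]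
      · simp
      · intro k _; exact hg.intervalIntegrable _ _
    have e3 : ∀ j ∈ Finset.range Q, ∫ w in (j : ℝ)..((j + 1 : ℕ) : ℝ), g w =
        ∫ w in (0 : ℝ)..1, |Real.cos (Real.pi * ((w + j) / Q))| * FF Q D w := by
      intro j _
      have := intervalIntegral.integral_comp_add_right (a := (0 : ℝ)) (b := 1) g (j : ℝ)
      rw [zero_add] at this
      push_cast
      rw [add_comm (j : ℝ) 1, ← this]
      simp only [g, FF_add_nat]
    rw [e1, intervalIntegral.integral_comp_mul_left _ hQ0.ne', mul_zero, mul_one, e2,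
      Finset.sum_congr rfl e3, ← intervalIntegral.integral_finsetSum]
    · simp only [← Finset.sum_mul, smul_eq_mul]
      have hc := FF_cont Q D
      have : ∫ w in (0 : ℝ)..1, (∑ j ∈ Finset.range Q, |Real.cos (Real.pi * ((w + j) / Q))|) * FF Q D w ≤
          ∫ w in (0 : ℝ)..1, (17 / 24 * Q) * FF Q D w := by
        apply intervalIntegral.integral_mono_on zero_le_one
        · apply Continuous.intervalIntegrable; fun_prop
        · apply Continuous.intervalIntegrable; fun_prop
        · intro w _
          exact mul_le_mul_of_nonneg_right (sum_abs_cos Q hQ w) (FF_nonneg _ _ _)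
      rw [intervalIntegral.integral_const_mul] at this
      calc _ ≤ (Q : ℝ)⁻¹ * (17 / 24 * Q * ∫ w in (0 : ℝ)..1, FF Q D w) := by gcongr
        _ = 17 / 24 * ∫ w in (0 : ℝ)..1, FF Q D w := by field_simp
        _ ≤ 17 / 24 * (17 / 24) ^ D := by gcongr
        _ = _ := by ring
    · intro j _
      have hc := FF_cont Q D
      apply Continuous.intervalIntegrable; fun_prop

theorem FF_int_log (Q : ℕ) (hQ : 8 ≤ Q) (D h : ℕ) (hh : 0 < h) :
    ∫ y in (0 : ℝ)..1, FF Q D (h * (Q : ℝ) ^ y) ≤ (h * Q) * (17 / 24) ^ D := by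
  have hQ0 : (0 : ℝ) < Q := by positivity
  have hQ8 : (8 : ℝ) ≤ Q := by exact_mod_cast hQ
  have hh1 : (1 : ℝ) ≤ h := by exact_mod_cast hh
  have hlog : 1 ≤ Real.log Q := by
    rw [Real.le_log_iff_exp_le hQ0]
    linarith [Real.exp_one_lt_d9]
  have hcont : Continuous fun y : ℝ => (Q : ℝ) ^ y := Real.continuous_const_rpow hQ0.ne'
  have hder : ∀ y : ℝ, HasDerivAt (fun y : ℝ => (h : ℝ) * (Q : ℝ) ^ y) (h * ((Q : ℝ) ^ y * Real.log Q)) y := by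
    intro y
    have := (Real.hasStrictDerivAt_const_rpow hQ0 y).hasDerivAt
    exact this.const_mul _
  have hc := FF_cont Q D
  have hsub := intervalIntegral.integral_comp_mul_deriv (a := 0) (b := 1) (f := fun y : ℝ => (h : ℝ) * (Q : ℝ) ^ y)
    (f' := fun y => h * ((Q : ℝ) ^ y * Real.log Q)) (g := FF Q D) (fun y _ => hder y)
    (by apply Continuous.continuousOn; fun_prop) hc
  have h1 : ∫ y in (0 : ℝ)..1, FF Q D (h * (Q : ℝ) ^ y) ≤
      ∫ y in (0 : ℝ)..1, (FF Q D ∘ fun y : ℝ => (h : ℝ) * (Q : ℝ) ^ y) y * (h * ((Q : ℝ) ^ y * Real.log Q)) := by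
    apply intervalIntegral.integral_mono_on zero_le_one
    · apply Continuous.intervalIntegrable; fun_prop
    · apply Continuous.intervalIntegrable; fun_prop
    · intro y hy
      simp only [Function.comp]
      apply le_mul_of_one_le_right (FF_nonneg _ _ _)
      have : (1 : ℝ) ≤ (Q : ℝ) ^ y := Real.one_le_rpow (by linarith) hy.1
      have h3 : 1 ≤ (Q : ℝ) ^ y * Real.log Q := one_le_mul_of_one_le_of_one_le this hlog
      exact one_le_mul_of_one_le_of_one_le hh1 h3
  rw [hsub] at h1
  simp only [Real.rpow_zero, Real.rpow_one, mul_one] at h1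
  refine h1.trans ?_
  have h2 := (FF_periodic Q D).intervalIntegral_add_zsmul_eq ((h * (Q - 1) : ℕ) : ℤ) (h : ℝ)
    (fun _ _ => hc.intervalIntegrable _ _)
  have h4 : (h : ℝ) + ((h * (Q - 1) : ℕ) : ℤ) • (1 : ℝ) = h * Q := by
    simp only [zsmul_eq_mul, mul_one, Int.cast_natCast]
    rw [Nat.cast_mul, Nat.cast_sub (by omega)]; push_cast; ring
  rw [h4, (FF_periodic Q D).intervalIntegral_add_eq (h : ℝ) 0, zero_add] at h2
  rw [h2, zsmul_eq_mul, Int.cast_natCast, Nat.cast_mul, Nat.cast_sub (by omega)]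
  have h5 := FF_int Q (by omega) D
  have h6 : (0 : ℝ) ≤ (17 / 24) ^ D := by positivity
  push_cast
  calc (h : ℝ) * (Q - 1) * ∫ v in (0 : ℝ)..1, FF Q D v ≤ (h : ℝ) * (Q - 1) * (17 / 24) ^ D := by
        apply mul_le_mul_of_nonneg_left h5; apply mul_nonneg <;> linarith
    _ ≤ _ := by
        apply mul_le_mul_of_nonneg_right _ h6
        nlinarith

theorem avg_FF (p Q h : ℕ) (hp : 2 ≤ p) (hQ : 8 ≤ Q) (hh : 0 < h)
    (hpQ : ∀ r s : ℕ, 0 < r → 0 < s → p ^ r ≠ Q ^ s) (ε : ℝ) (hε : 0 < ε) :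
    ∃ D L0 : ℕ, ∀ L ≥ L0, ∀ M : ℕ,
      ∑ n ∈ Finset.Ico M (M + L), FF Q D (h * ((p : ℝ) ^ n / (Q : ℝ) ^ (Nat.log Q (p ^ n)))) ≤ ε * L := by
  have hQ0 : (0 : ℝ) < Q := by positivity
  have hQ1 : (1 : ℝ) < Q := by exact_mod_cast (by omega : 1 < Q)
  have hp1 : (1 : ℝ) < p := by exact_mod_cast (by omega : 1 < p)
  have hp0 : (0 : ℝ) < p := by positivity
  have hlQ : 0 < Real.log Q := Real.log_pos hQ1
  have hlp : 0 < Real.log p := Real.log_pos hp1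
  obtain ⟨D, hD⟩ : ∃ D : ℕ, (h * Q : ℝ) * (17 / 24) ^ D < ε / 2 := by
    have : Tendsto (fun D : ℕ => (h * Q : ℝ) * (17 / 24) ^ D) atTop (𝓝 ((h * Q : ℝ) * 0)) :=
      (tendsto_pow_atTop_nhds_zero_of_lt_one (by norm_num) (by norm_num)).const_mul _
    rw [mul_zero] at this
    exact (this.eventually (gt_mem_nhds (by positivity))).exists
  have hirr : ∀ k : ℤ, k ≠ 0 → ∀ m : ℤ, k * (Real.logb Q p) ≠ m := by
    have main : ∀ k : ℕ, 0 < k → ∀ m : ℤ, (k : ℝ) * Real.logb Q p ≠ m := by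
      intro k hk m hm
      rw [Real.logb] at hm
      have hk0 : (0 : ℝ) < k := by exact_mod_cast hk
      have hmpos : (0 : ℝ) < m := by rw [← hm]; positivity
      have hm0 : 0 < m := by exact_mod_cast hmpos
      lift m to ℕ using hm0.le
      apply hpQ k m hk (by exact_mod_cast hm0)
      have e : Real.log ((p : ℝ) ^ k) = Real.log ((Q : ℝ) ^ m) := by
        rw [Real.log_pow, Real.log_pow]
        field_simp at hm
        push_cast at hm
        linarith
      have := Real.log_injOn_pos (Set.mem_Ioi.2 (by positivity)) (Set.mem_Ioi.2 (by positivity)) e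
      exact_mod_cast this
    intro k hk m
    rcases lt_or_gt_of_ne hk with h1 | h1
    · intro h2
      apply main k.natAbs (by omega) (-m)
      rw [← Int.cast_natCast, Int.natCast_natAbs, abs_of_neg h1]
      push_cast; linarith
    · intro h2
      apply main k.natAbs (by omega) m
      rw [← Int.cast_natCast, Int.natCast_natAbs, abs_of_pos h1]
      exact h2
  have hc := FF_cont Q D
  have hcont : Continuous fun y : ℝ => (Q : ℝ) ^ y := Real.continuous_const_rpow hQ0.ne'
  let G : C(UnitAddCircle, ℝ) := ⟨AddCircle.liftIco 1 0 (fun y : ℝ => FF Q D (h * (Q : ℝ) ^ y)), by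
    apply AddCircle.liftIco_zero_continuous
    · simp only [Real.rpow_zero, Real.rpow_one, mul_one]
      rw [FF_nat, ← Nat.cast_mul, FF_nat]
    · apply Continuous.continuousOn; fun_prop⟩
  have hGc : ∀ y : ℝ, y ∈ Set.Ico (0 : ℝ) 1 → G (y : UnitAddCircle) = FF Q D (h * (Q : ℝ) ^ y) := by
    intro y hy
    exact AddCircle.liftIco_zero_coe_apply (f := fun y : ℝ => FF Q D (h * (Q : ℝ) ^ y)) hy
  have hGint : ∫ t, G t ≤ ε / 2 := by
    rw [← UnitAddCircle.intervalIntegral_preimage 0 (fun t => G t), zero_add]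
    have : ∫ a in (0 : ℝ)..1, G (a : UnitAddCircle) = ∫ y in (0 : ℝ)..1, FF Q D (h * (Q : ℝ) ^ y) := by
      apply intervalIntegral.integral_congr_ae
      have : ∀ᵐ y : ℝ, y ≠ 1 := by simp [ae_iff]
      filter_upwards [this] with y hy hy2
      rw [Set.uIoc_of_le zero_le_one] at hy2
      exact hGc y ⟨hy2.1.le, lt_of_le_of_ne hy2.2 hy⟩
    rw [this]
    exact (FF_int_log Q hQ D h hh).trans hD.le
  obtain ⟨L0, hL0⟩ := rot_equi (Real.logb Q p) hirr G (ε / 2) (by positivity)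
  refine ⟨D, L0, fun L hL M => ?_⟩
  have h1 := hL0 L hL M
  have h2 : ∀ n ∈ Finset.Ico M (M + L), FF Q D (h * ((p : ℝ) ^ n / (Q : ℝ) ^ (Nat.log Q (p ^ n)))) =
      G ((n * Real.logb Q p : ℝ) : UnitAddCircle) := by
    intro n _
    set k := Nat.log Q (p ^ n) with hk
    have hk1 : (Q : ℝ) ^ k ≤ (p : ℝ) ^ n := by
      exact_mod_cast Nat.pow_log_le_self Q (by positivity)
    have hk2 : (p : ℝ) ^ n < (Q : ℝ) ^ (k + 1) := by
      exact_mod_cast Nat.lt_pow_succ_log_self (by omega) (p ^ n)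
    have hpos : 0 < (p : ℝ) ^ n / (Q : ℝ) ^ k := by positivity
    set y := Real.logb Q ((p : ℝ) ^ n / (Q : ℝ) ^ k) with hy
    have hQy : (Q : ℝ) ^ y = (p : ℝ) ^ n / (Q : ℝ) ^ k := Real.rpow_logb hQ0 hQ1.ne' hpos
    have hyI : y ∈ Set.Ico (0 : ℝ) 1 := by
      constructor
      · apply Real.logb_nonneg hQ1
        rw [le_div_iff₀ (by positivity)]; linarith
      · rw [hy, Real.logb_lt_iff_lt_rpow hQ1 hpos, Real.rpow_one, div_lt_iff₀ (by positivity), ← pow_succ']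
        exact hk2
    have hyn : (n * Real.logb Q p : ℝ) = y + k := by
      rw [hy, Real.logb_div (by positivity) (by positivity), Real.logb_pow, Real.logb_pow, Real.logb_self_eq_one hQ1]
      ring
    have : ((n * Real.logb Q p : ℝ) : UnitAddCircle) = (y : UnitAddCircle) := by
      rw [hyn, AddCircle.coe_add]
      have : ((k : ℝ) : UnitAddCircle) = 0 := by
        rw [AddCircle.coe_eq_zero_iff]
        exact ⟨k, by simp⟩
      rw [this, add_zero]
    rw [this, hGc y hyI, hQy]
  rw [Finset.sum_congr rfl h2]
  refine h1.trans ?_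
  gcongr
  linarith


noncomputable def ee (t : ℝ) : ℂ := Complex.exp (((2 * Real.pi * t : ℝ) : ℂ) * Complex.I)

theorem ee_add (s t : ℝ) : ee (s + t) = ee s * ee t := by
  unfold ee; rw [← Complex.exp_add]; congr 1; push_cast; ring

theorem ee_norm (t : ℝ) : ‖ee t‖ = 1 := Complex.norm_exp_ofReal_mul_I _

theorem ee_zero : ee 0 = 1 := by simp [ee]

theorem ee_conj (t : ℝ) : (starRingEnd ℂ) (ee t) = ee (-t) := by
  unfold ee; rw [← Complex.exp_conj]; congr 1
  rw [map_mul, Complex.conj_ofReal, Complex.conj_I]; push_cast; ring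

theorem ee_sum {ι : Type*} (s : Finset ι) (f : ι → ℝ) : ee (∑ i ∈ s, f i) = ∏ i ∈ s, ee (f i) := by
  induction s using Finset.induction_on with
  | empty => simp [ee_zero]
  | insert a s ha ih => rw [Finset.sum_insert ha, Finset.prod_insert ha, ee_add, ih]

theorem norm_one_add_ee (t : ℝ) : ‖1 + ee t‖ = 2 * |Real.cos (Real.pi * t)| := by
  have h : 1 + ee t = ee (t / 2) * ((2 * Real.cos (Real.pi * t) : ℝ) : ℂ) := by
    have h2 : ((2 * Real.cos (Real.pi * t) : ℝ) : ℂ) = ee (t / 2) + ee (-(t / 2)) := by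
      push_cast
      rw [Complex.cos]
      unfold ee
      rw [mul_div_cancel₀ _ (two_ne_zero)]
      congr 2
      · push_cast; ring
      · push_cast; ring
    rw [h2, mul_add, ← ee_add, ← ee_add]
    rw [show t / 2 + t / 2 = t by ring, show t / 2 + -(t / 2) = 0 by ring, ee_zero, add_comm]
  rw [h, norm_mul, ee_norm, one_mul, Complex.norm_real, Real.norm_eq_abs, abs_mul, abs_two]

theorem ee_sub_le (s t : ℝ) : ‖ee s - ee t‖ ≤ 2 * Real.pi * |s - t| := by
  have h : ee s - ee t = ee t * (ee (s - t) - 1) := by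
    rw [mul_sub, ← ee_add, mul_one]; congr 2; ring
  rw [h, norm_mul, ee_norm, one_mul]
  unfold ee
  rw [mul_comm]
  refine (Real.norm_exp_I_mul_ofReal_sub_one_le).trans ?_
  rw [Real.norm_eq_abs, abs_mul, abs_of_pos Real.two_pi_pos]

theorem prod_le_prod_add {ι : Type*} (s : Finset ι) (a b : ι → ℝ) (ha0 : ∀ i ∈ s, 0 ≤ a i) (ha1 : ∀ i ∈ s, a i ≤ 1)
    (hb0 : ∀ i ∈ s, 0 ≤ b i) (hb1 : ∀ i ∈ s, b i ≤ 1) :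
    ∏ i ∈ s, a i ≤ ∏ i ∈ s, b i + ∑ i ∈ s, |a i - b i| := by
  induction s using Finset.induction_on with
  | empty => simp
  | insert j s hj ih =>
    have ih' := ih (fun i hi => ha0 i (Finset.mem_insert_of_mem hi)) (fun i hi => ha1 i (Finset.mem_insert_of_mem hi))
      (fun i hi => hb0 i (Finset.mem_insert_of_mem hi)) (fun i hi => hb1 i (Finset.mem_insert_of_mem hi))
    rw [Finset.prod_insert hj, Finset.prod_insert hj, Finset.sum_insert hj]
    have hB0 : 0 ≤ ∏ i ∈ s, b i := Finset.prod_nonneg fun i hi => hb0 i (Finset.mem_insert_of_mem hi)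
    have hB1 : ∏ i ∈ s, b i ≤ 1 := Finset.prod_le_one (fun i hi => hb0 i (Finset.mem_insert_of_mem hi))
      fun i hi => hb1 i (Finset.mem_insert_of_mem hi)
    have hS : 0 ≤ ∑ i ∈ s, |a i - b i| := Finset.sum_nonneg fun _ _ => abs_nonneg _
    have h0 := ha0 j (Finset.mem_insert_self _ _)
    have h1 := ha1 j (Finset.mem_insert_self _ _)
    have h2 := le_abs_self (a j - b j)
    have h3 := abs_nonneg (a j - b j)
    calc a j * ∏ i ∈ s, a i ≤ a j * (∏ i ∈ s, b i + ∑ i ∈ s, |a i - b i|) := mul_le_mul_of_nonneg_left ih' h0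
      _ ≤ b j * ∏ i ∈ s, b i + (|a j - b j| + ∑ i ∈ s, |a i - b i|) := by nlinarith

/-- product of cosines for a pair of exponents -/
noncomputable def PP (p Q h a a' n m : ℕ) : ℝ :=
  ∏ k ∈ Finset.Ico (a + 1) a', |Real.cos (Real.pi * ((h * (p : ℝ) ^ n - h * (p : ℝ) ^ m) / (Q : ℝ) ^ (k + 1)))|

theorem PP_nonneg (p Q h a a' n m : ℕ) : 0 ≤ PP p Q h a a' n m := Finset.prod_nonneg fun _ _ => abs_nonneg _

theorem PP_le_one (p Q h a a' n m : ℕ) : PP p Q h a a' n m ≤ 1 :=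
  Finset.prod_le_one (fun _ _ => abs_nonneg _) fun _ _ => Real.abs_cos_le_one _

theorem PP_symm (p Q h a a' n m : ℕ) : PP p Q h a a' n m = PP p Q h a a' m n := by
  unfold PP
  refine Finset.prod_congr rfl fun k _ => ?_
  rw [← Real.cos_neg]
  congr 2; ring

theorem PP_le (p Q h a a' n m D : ℕ) (hp : 2 ≤ p) (hQ : 8 ≤ Q) (hmn : m ≤ n)
    (hlow : Q ^ (a + D + 1) ≤ p ^ n) (hhigh : p ^ n < Q ^ a') :
    PP p Q h a a' n m ≤ FF Q D (h * ((p : ℝ) ^ n / (Q : ℝ) ^ (Nat.log Q (p ^ n)))) +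
      (D * (Real.pi * (h * (Q : ℝ) ^ (D + 1)))) * (1 / 2) ^ (n - m) := by
  have hQ0 : (0 : ℝ) < Q := by positivity
  have hQ1 : (1 : ℝ) ≤ Q := by exact_mod_cast (by omega : 1 ≤ Q)
  have hp0 : (0 : ℝ) < p := by positivity
  have hp2 : (2 : ℝ) ≤ p := by exact_mod_cast hp
  set K := Nat.log Q (p ^ n) with hK
  have hk1' : Q ^ K ≤ p ^ n := Nat.pow_log_le_self Q (by positivity)
  have hk2' : p ^ n < Q ^ (K + 1) := Nat.lt_pow_succ_log_self (by omega) (p ^ n)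
  have hKlow : a + D + 1 ≤ K := by
    by_contra hcon
    have : Q ^ (K + 1) ≤ Q ^ (a + D + 1) := Nat.pow_le_pow_right (by omega) (by omega)
    omega
  have hKhigh : K < a' := by
    by_contra hcon
    have : Q ^ a' ≤ Q ^ K := Nat.pow_le_pow_right (by omega) (by omega)
    omega
  have hk2 : (p : ℝ) ^ n < (Q : ℝ) ^ (K + 1) := by exact_mod_cast hk2'
  set u := (p : ℝ) ^ n / (Q : ℝ) ^ K with hu
  have hu0 : 0 < u := by positivity
  have huQ : u ≤ Q := by
    rw [hu, div_le_iff₀ (by positivity), ← pow_succ']; exact hk2.le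
  let T : Finset ℕ := (Finset.range D).image (fun i => K - i - 1)
  have hT : T ⊆ Finset.Ico (a + 1) a' := by
    intro k hk
    simp only [T, Finset.mem_image, Finset.mem_range] at hk
    obtain ⟨i, hi, rfl⟩ := hk
    rw [Finset.mem_Ico]; omega
  have hinj : Set.InjOn (fun i => K - i - 1) (Finset.range D : Set ℕ) := by
    intro i hi j hj hij
    simp only [Finset.coe_range, Set.mem_Iio] at hi hj
    simp only at hij
    omega
  have h1 : PP p Q h a a' n m ≤
      ∏ i ∈ Finset.range D, |Real.cos (Real.pi * ((h * (p : ℝ) ^ n - h * (p : ℝ) ^ m) / (Q : ℝ) ^ (K - i - 1 + 1)))| := by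
    unfold PP
    rw [← Finset.prod_image (s := Finset.range D) (g := fun i => K - i - 1)
      (f := fun k => |Real.cos (Real.pi * ((h * (p : ℝ) ^ n - h * (p : ℝ) ^ m) / (Q : ℝ) ^ (k + 1)))|) hinj]
    exact Finset.prod_le_prod_of_subset_of_le_one hT (fun _ _ => abs_nonneg _) (fun _ _ _ => Real.abs_cos_le_one _)
  refine h1.trans ((prod_le_prod_add _ _ (fun i => |Real.cos (Real.pi * ((Q : ℝ) ^ i * (h * u)))|)
    (fun _ _ => abs_nonneg _) (fun _ _ => Real.abs_cos_le_one _)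
    (fun _ _ => abs_nonneg _) (fun _ _ => Real.abs_cos_le_one _)).trans ?_)
  unfold FF
  gcongr
  have hpm : (p : ℝ) ^ m ≤ (p : ℝ) ^ n * (1 / 2) ^ (n - m) := by
    have : (p : ℝ) ^ n = (p : ℝ) ^ m * (p : ℝ) ^ (n - m) := by rw [← pow_add]; congr 1; omega
    rw [this, mul_assoc, ← mul_pow]
    apply le_mul_of_one_le_right (by positivity)
    apply one_le_pow₀
    linarith
  have hbound : ∀ i ∈ Finset.range D, |(|Real.cos (Real.pi * ((h * (p : ℝ) ^ n - h * (p : ℝ) ^ m) / (Q : ℝ) ^ (K - i - 1 + 1)))|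
      - |Real.cos (Real.pi * ((Q : ℝ) ^ i * (h * u)))|)| ≤ (Real.pi * (h * (Q : ℝ) ^ (D + 1))) * (1 / 2) ^ (n - m) := by
    intro i hi
    rw [Finset.mem_range] at hi
    refine (abs_abs_sub_abs_le_abs_sub _ _).trans ?_
    refine (Real.abs_cos_sub_cos_le _ _).trans ?_
    have hKi : (Q : ℝ) ^ K = (Q : ℝ) ^ i * (Q : ℝ) ^ (K - i - 1 + 1) := by
      rw [← pow_add]; congr 1; omega
    have e : Real.pi * ((h * (p : ℝ) ^ n - h * (p : ℝ) ^ m) / (Q : ℝ) ^ (K - i - 1 + 1)) -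
        Real.pi * ((Q : ℝ) ^ i * (h * u)) = -(Real.pi * (h * ((Q : ℝ) ^ i * ((p : ℝ) ^ m / (Q : ℝ) ^ K)))) := by
      rw [hu, hKi]; field_simp; ring
    rw [e, abs_neg, abs_of_nonneg (by positivity)]
    have h3 : (p : ℝ) ^ m / (Q : ℝ) ^ K ≤ Q * (1 / 2) ^ (n - m) := by
      calc (p : ℝ) ^ m / (Q : ℝ) ^ K ≤ (p : ℝ) ^ n * (1 / 2) ^ (n - m) / (Q : ℝ) ^ K := by gcongr
        _ = u * (1 / 2) ^ (n - m) := by rw [hu]; ring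
        _ ≤ _ := by gcongr
    calc Real.pi * (h * ((Q : ℝ) ^ i * ((p : ℝ) ^ m / (Q : ℝ) ^ K)))
        ≤ Real.pi * (h * ((Q : ℝ) ^ D * (Q * (1 / 2) ^ (n - m)))) := by
          have := Real.pi_pos
          gcongr
      _ = _ := by ring
  refine (Finset.sum_le_card_nsmul _ _ _ hbound).trans ?_
  rw [Finset.card_range, nsmul_eq_mul]
  apply le_of_eq; ring


theorem sum_powerset_ee (s : Finset ℕ) (f : ℕ → ℝ) (t x0 : ℝ) :
    ∑ S ∈ s.powerset, ee (t * (x0 + ∑ k ∈ S, f k)) = ee (t * x0) * ∏ k ∈ s, (1 + ee (t * f k)) := by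
  rw [Finset.prod_one_add, Finset.mul_sum]
  refine Finset.sum_congr rfl fun S _ => ?_
  rw [mul_add, ee_add, Finset.mul_sum, ee_sum]

theorem norm_sq_sum_ee (I : Finset ℕ) (g : ℕ → ℝ) (x : ℝ) :
    (((‖∑ n ∈ I, ee (g n * x)‖ ^ 2 : ℝ)) : ℂ) = ∑ n ∈ I, ∑ m ∈ I, ee ((g n - g m) * x) := by
  push_cast
  rw [← Complex.mul_conj', map_sum, Finset.sum_mul_sum]
  refine Finset.sum_congr rfl fun n _ => Finset.sum_congr rfl fun m _ => ?_
  rw [ee_conj, ← ee_add]; congr 1; ring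

theorem block1 (p Q h a a' : ℕ) (I : Finset ℕ) (x0 : ℝ) :
    ∑ S ∈ (Finset.Ico (a + 1) a').powerset,
      ‖∑ n ∈ I, ee (h * (p : ℝ) ^ n * (x0 + ∑ k ∈ S, ((Q : ℝ) ^ (k + 1))⁻¹))‖ ^ 2
      ≤ 2 ^ (Finset.Ico (a + 1) a').card * ∑ n ∈ I, ∑ m ∈ I, PP p Q h a a' n m := by
  set s := Finset.Ico (a + 1) a' with hs
  have key : (((∑ S ∈ s.powerset,
      ‖∑ n ∈ I, ee (h * (p : ℝ) ^ n * (x0 + ∑ k ∈ S, ((Q : ℝ) ^ (k + 1))⁻¹))‖ ^ 2 : ℝ)) : ℂ) =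
      ∑ n ∈ I, ∑ m ∈ I, (ee ((h * (p : ℝ) ^ n - h * (p : ℝ) ^ m) * x0) *
        ∏ k ∈ s, (1 + ee ((h * (p : ℝ) ^ n - h * (p : ℝ) ^ m) * ((Q : ℝ) ^ (k + 1))⁻¹))) := by
    rw [Complex.ofReal_sum]
    have : ∀ S ∈ s.powerset, (((‖∑ n ∈ I, ee (h * (p : ℝ) ^ n * (x0 + ∑ k ∈ S, ((Q : ℝ) ^ (k + 1))⁻¹))‖ ^ 2 : ℝ)) : ℂ)
        = ∑ n ∈ I, ∑ m ∈ I, ee ((h * (p : ℝ) ^ n - h * (p : ℝ) ^ m) * (x0 + ∑ k ∈ S, ((Q : ℝ) ^ (k + 1))⁻¹)) :=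
      fun S _ => norm_sq_sum_ee I (fun n => h * (p : ℝ) ^ n) _
    rw [Finset.sum_congr rfl this, Finset.sum_comm]
    refine Finset.sum_congr rfl fun n _ => ?_
    rw [Finset.sum_comm]
    refine Finset.sum_congr rfl fun m _ => ?_
    rw [sum_powerset_ee]
  have h0 : 0 ≤ ∑ S ∈ s.powerset,
      ‖∑ n ∈ I, ee (h * (p : ℝ) ^ n * (x0 + ∑ k ∈ S, ((Q : ℝ) ^ (k + 1))⁻¹))‖ ^ 2 :=
    Finset.sum_nonneg fun _ _ => by positivity
  rw [← abs_of_nonneg h0, ← Real.norm_eq_abs, ← Complex.norm_real, key]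
  rw [Finset.mul_sum]
  refine norm_sum_le_of_le _ fun n _ => ?_
  rw [Finset.mul_sum]
  refine norm_sum_le_of_le _ fun m _ => ?_
  rw [norm_mul, ee_norm, one_mul, norm_prod]
  unfold PP
  rw [← hs, ← Finset.prod_const, ← Finset.prod_mul_distrib]
  apply le_of_eq
  refine Finset.prod_congr rfl fun k _ => ?_
  rw [norm_one_add_ee, div_eq_mul_inv]

theorem geom_half (n M : ℕ) : ∑ m ∈ Finset.Icc M n, (1 / 2 : ℝ) ^ (n - m) ≤ 2 := by
  calc ∑ m ∈ Finset.Icc M n, (1 / 2 : ℝ) ^ (n - m) ≤ ∑ m ∈ Finset.range (n + 1), (1 / 2 : ℝ) ^ (n - m) := by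
        apply Finset.sum_le_sum_of_subset_of_nonneg
        · intro m hm; simp at hm ⊢; omega
        · intros; positivity
    _ = ∑ m ∈ Finset.range (n + 1), (1 / 2 : ℝ) ^ m := by
        rw [← Finset.sum_range_reflect]
        refine Finset.sum_congr rfl fun m hm => ?_
        simp at hm
        congr 1; omega
    _ ≤ 2 := sum_geometric_two_le _

theorem block2 (p Q h : ℕ) (hp : 2 ≤ p) (hQ : 8 ≤ Q) (hh : 0 < h)
    (hpQ : ∀ r s : ℕ, 0 < r → 0 < s → p ^ r ≠ Q ^ s) (ε : ℝ) (hε : 0 < ε) :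
    ∃ L0 : ℕ, ∀ L ≥ L0, ∀ M a a' : ℕ, Q ^ a ≤ Q * p ^ M → p ^ (M + L) ≤ Q ^ a' →
      ∑ n ∈ Finset.Ico M (M + L), ∑ m ∈ Finset.Ico M (M + L), PP p Q h a a' n m ≤ ε * (L : ℝ) ^ 2 := by
  obtain ⟨D, L1, hD⟩ := avg_FF p Q h hp hQ hh hpQ (ε / 4) (by positivity)
  obtain ⟨T, hT⟩ : ∃ T : ℕ, Q ^ (D + 2) ≤ p ^ T := by
    refine ⟨Q ^ (D + 2), ?_⟩
    exact (Nat.lt_pow_self (by omega)).le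
  set C : ℝ := D * (Real.pi * (h * (Q : ℝ) ^ (D + 1))) with hC
  have hC0 : 0 ≤ C := by have := Real.pi_pos; positivity
  obtain ⟨L2, hL2⟩ := exists_nat_ge (4 * (T + 2 * C) / ε)
  refine ⟨max L1 L2, fun L hL M a a' ha ha' => ?_⟩
  have hL1 : L1 ≤ L := le_trans (le_max_left _ _) hL
  have hL2' : L2 ≤ L := le_trans (le_max_right _ _) hL
  set I := Finset.Ico M (M + L) with hI
  set F : ℕ → ℝ := fun n => FF Q D (h * ((p : ℝ) ^ n / (Q : ℝ) ^ (Nat.log Q (p ^ n)))) with hF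
  set B : ℕ → ℕ → ℝ := fun n m => if m ≤ n then ((if n < M + T then 1 else 0) + F n) + C * (1 / 2) ^ (n - m) else 0 with hB
  have hF0 : ∀ n, 0 ≤ F n := fun n => FF_nonneg _ _ _
  have hB0 : ∀ n m, 0 ≤ B n m := by
    intro n m
    simp only [hB]
    split_ifs <;> first | exact le_refl _ | (have := hF0 n; positivity)
  have h1 : ∀ n ∈ I, ∀ m, m ≤ n → PP p Q h a a' n m ≤ B n m := by
    intro n hn m hmn
    rw [hI, Finset.mem_Ico] at hn
    simp only [hB, if_pos hmn]
    by_cases hnT : n < M + T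
    · rw [if_pos hnT]
      have := PP_le_one p Q h a a' n m
      have h2 := hF0 n
      have : 0 ≤ C * (1 / 2) ^ (n - m) := by positivity
      linarith
    · rw [if_neg hnT, zero_add]
      apply PP_le p Q h a a' n m D hp hQ hmn
      · calc Q ^ (a + D + 1) = Q ^ a * Q ^ (D + 1) := by ring
          _ ≤ Q * p ^ M * Q ^ (D + 1) := Nat.mul_le_mul_right _ ha
          _ = Q ^ (D + 2) * p ^ M := by ring
          _ ≤ p ^ T * p ^ M := Nat.mul_le_mul_right _ hT
          _ = p ^ (M + T) := by ring
          _ ≤ p ^ n := Nat.pow_le_pow_right (by omega) (by omega)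
      · exact lt_of_lt_of_le (Nat.pow_lt_pow_right (by omega) hn.2) ha'
  have h2 : ∀ n ∈ I, ∀ m ∈ I, PP p Q h a a' n m ≤ B n m + B m n := by
    intro n hn m hm
    rcases le_total m n with hmn | hmn
    · have := h1 n hn m hmn
      have := hB0 m n
      linarith
    · have := h1 m hm n hmn
      rw [PP_symm] at this
      have := hB0 n m
      linarith
  have h3 : ∀ n ∈ I, ∑ m ∈ I, B n m ≤ L * ((if n < M + T then 1 else 0) + F n) + 2 * C := by
    intro n hn
    have hn' := hn
    rw [hI, Finset.mem_Ico] at hn'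
    rw [← Finset.sum_filter]
    have e : I.filter (fun m => m ≤ n) = Finset.Icc M n := by
      ext m; simp [hI]; omega
    rw [e, Finset.sum_add_distrib, ← Finset.mul_sum, Finset.sum_const, nsmul_eq_mul]
    have h4 := geom_half n M
    have h5 : ((Finset.Icc M n).card : ℝ) ≤ L := by
      rw [Nat.card_Icc]; exact_mod_cast (by omega)
    have h6 : (0 : ℝ) ≤ (if n < M + T then 1 else 0) + F n := by
      have := hF0 n
      split_ifs <;> linarith
    have := mul_le_mul_of_nonneg_right h5 h6
    have := mul_le_mul_of_nonneg_left h4 hC0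
    linarith
  have h4 : ∑ n ∈ I, ∑ m ∈ I, B n m ≤ L * (T + ε / 4 * L) + L * (2 * C) := by
    refine (Finset.sum_le_sum h3).trans ?_
    rw [Finset.sum_add_distrib, ← Finset.mul_sum, Finset.sum_add_distrib, Finset.sum_const, nsmul_eq_mul]
    have hc : I.card = L := by simp [hI]
    rw [hc]
    have h5 : ∑ n ∈ I, (if n < M + T then (1 : ℝ) else 0) ≤ T := by
      rw [Finset.sum_boole]
      have : (I.filter (fun n => n < M + T)).card ≤ (Finset.Ico M (M + T)).card := by
        apply Finset.card_le_card
        intro m; simp [hI]; omega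
      rw [Nat.card_Ico] at this
      exact_mod_cast (by omega)
    have h6 := hD L hL1 M
    gcongr
  have h5 : ∑ n ∈ I, ∑ m ∈ I, B m n = ∑ n ∈ I, ∑ m ∈ I, B n m := Finset.sum_comm
  have h6 : ∑ n ∈ I, ∑ m ∈ I, PP p Q h a a' n m ≤ ∑ n ∈ I, ∑ m ∈ I, B n m + ∑ n ∈ I, ∑ m ∈ I, B m n := by
    rw [← Finset.sum_add_distrib]
    refine Finset.sum_le_sum fun n hn => ?_
    rw [← Finset.sum_add_distrib]
    exact Finset.sum_le_sum fun m hm => h2 n hn m hm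
  have h7 : 4 * (T + 2 * C) ≤ ε * L := by
    rw [div_le_iff₀ hε] at hL2
    have : (L2 : ℝ) ≤ L := by exact_mod_cast hL2'
    nlinarith
  have h8 := mul_le_mul_of_nonneg_left h7 (Nat.cast_nonneg (α := ℝ) L)
  rw [h5] at h6
  nlinarith

/-- simultaneous choice for all frequencies up to m -/
theorem block3 (p Q m : ℕ) (hp : 2 ≤ p) (hQ : 8 ≤ Q)
    (hpQ : ∀ r s : ℕ, 0 < r → 0 < s → p ^ r ≠ Q ^ s) (ε : ℝ) (hε : 0 < ε) :
    ∃ L0 : ℕ, ∀ L ≥ L0, ∀ M a a' : ℕ, Q ^ a ≤ Q * p ^ M → p ^ (M + L) ≤ Q ^ a' → ∀ x0 : ℝ,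
      ∃ S ⊆ Finset.Ico (a + 1) a', ∀ h : ℕ, 0 < h → h ≤ m →
        ‖∑ n ∈ Finset.Ico M (M + L), ee (h * (p : ℝ) ^ n * (x0 + ∑ k ∈ S, ((Q : ℝ) ^ (k + 1))⁻¹))‖ ≤ ε * L := by
  have hm1 : (0 : ℝ) < m + 1 := by positivity
  have H : ∀ h : ℕ, ∃ L0 : ℕ, 0 < h → ∀ L ≥ L0, ∀ M a a' : ℕ, Q ^ a ≤ Q * p ^ M → p ^ (M + L) ≤ Q ^ a' →
      ∑ n ∈ Finset.Ico M (M + L), ∑ m ∈ Finset.Ico M (M + L), PP p Q h a a' n m ≤ (ε ^ 2 / (m + 1)) * (L : ℝ) ^ 2 := by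
    intro h
    by_cases hh : 0 < h
    · obtain ⟨L0, hL0⟩ := block2 p Q h hp hQ hh hpQ (ε ^ 2 / (m + 1)) (by positivity)
      exact ⟨L0, fun _ => hL0⟩
    · exact ⟨0, fun h => absurd h hh⟩
  choose Lf hLf using H
  refine ⟨(Finset.Icc 1 m).sup Lf, fun L hL M a a' ha ha' x0 => ?_⟩
  set s := Finset.Ico (a + 1) a' with hs
  let Z : ℕ → Finset ℕ → ℝ := fun h S =>
    ‖∑ n ∈ Finset.Ico M (M + L), ee (h * (p : ℝ) ^ n * (x0 + ∑ k ∈ S, ((Q : ℝ) ^ (k + 1))⁻¹))‖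
  have hZ : ∀ h ∈ Finset.Icc 1 m, ∑ S ∈ s.powerset, Z h S ^ 2 ≤ 2 ^ s.card * ((ε ^ 2 / (m + 1)) * (L : ℝ) ^ 2) := by
    intro h hh
    have hh0 : 0 < h := by simp at hh; omega
    have := hLf h hh0 L (le_trans (Finset.le_sup hh) hL) M a a' ha ha'
    exact (block1 p Q h a a' _ x0).trans (mul_le_mul_of_nonneg_left this (by positivity))
  have hsum : ∑ S ∈ s.powerset, ∑ h ∈ Finset.Icc 1 m, Z h S ^ 2 ≤ ∑ S ∈ s.powerset, (ε * L) ^ 2 := by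
    rw [Finset.sum_comm, Finset.sum_const, Finset.card_powerset, nsmul_eq_mul]
    refine (Finset.sum_le_card_nsmul _ _ _ hZ).trans ?_
    rw [Nat.card_Icc, nsmul_eq_mul, Nat.add_sub_cancel]
    push_cast
    have : (m : ℝ) * (2 ^ s.card * (ε ^ 2 / (m + 1) * (L : ℝ) ^ 2)) = (m / (m + 1)) * (2 ^ s.card * (ε * L) ^ 2) := by
      field_simp
    rw [this]
    apply mul_le_of_le_one_left (by positivity)
    rw [div_le_one hm1]; linarith
  obtain ⟨S, hS, hle⟩ := Finset.exists_le_of_sum_le ⟨∅, Finset.empty_mem_powerset s⟩ hsum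
  refine ⟨S, Finset.mem_powerset.1 hS, fun h h0 hm => ?_⟩
  have h1 : Z h S ^ 2 ≤ (ε * L) ^ 2 :=
    (Finset.single_le_sum (f := fun h => Z h S ^ 2) (fun _ _ => sq_nonneg _)
      (Finset.mem_Icc.2 ⟨h0, hm⟩)).trans hle
  exact (pow_le_pow_iff_left₀ (norm_nonneg _) (by positivity) (two_ne_zero)).1 h1


noncomputable def xt (Q : ℕ) (B : Set ℕ) (i : ℕ) : ℝ := if i ∈ B then ((Q : ℝ) ^ (i + 1))⁻¹ else 0
noncomputable def XX (Q : ℕ) (B : Set ℕ) : ℝ := ∑' i, xt Q B i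
noncomputable def XP (Q : ℕ) (B : Set ℕ) (a : ℕ) : ℝ := ∑ i ∈ Finset.range a, xt Q B i

theorem xt_nonneg (Q : ℕ) (B : Set ℕ) (i : ℕ) : 0 ≤ xt Q B i := by
  unfold xt; split_ifs <;> positivity

theorem xt_le (Q : ℕ) (B : Set ℕ) (i : ℕ) : xt Q B i ≤ ((Q : ℝ) ^ (i + 1))⁻¹ := by
  unfold xt; split_ifs
  · exact le_refl _
  · positivity

theorem hasSum_geoQ (Q : ℕ) (hQ : 8 ≤ Q) (a : ℕ) :
    HasSum (fun i : ℕ => ((Q : ℝ) ^ (i + a + 1))⁻¹) (((Q : ℝ) ^ a)⁻¹ * (1 / (Q - 1))) := by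
  have hQ' : (8 : ℝ) ≤ Q := by exact_mod_cast hQ
  have h := hasSum_geometric_of_lt_one (r := (Q : ℝ)⁻¹) (by positivity) (inv_lt_one_of_one_lt₀ (by linarith))
  have h2 := h.mul_left (((Q : ℝ) ^ (a + 1))⁻¹)
  have e1 : ((Q : ℝ) ^ (a + 1))⁻¹ * (1 - (Q : ℝ)⁻¹)⁻¹ = (((Q : ℝ) ^ a)⁻¹ * (1 / (Q - 1))) := by
    have : (Q : ℝ) - 1 ≠ 0 := by linarith
    have : (1 - (Q : ℝ)⁻¹) = (Q - 1) / Q := by field_simp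
    rw [this]
    field_simp
    ring
  rw [e1] at h2
  have e2 : (fun i : ℕ => ((Q : ℝ) ^ (i + a + 1))⁻¹) = fun i : ℕ => ((Q : ℝ) ^ (a + 1))⁻¹ * (Q : ℝ)⁻¹ ^ i := ?_
  · rw [e2]; exact h2
  funext i
  rw [inv_pow, ← mul_inv, ← pow_add]
  congr 2; ring

theorem summable_xt (Q : ℕ) (hQ : 8 ≤ Q) (B : Set ℕ) : Summable (xt Q B) :=
  Summable.of_nonneg_of_le (xt_nonneg Q B) (xt_le Q B) (hasSum_geoQ Q hQ 0).summable

theorem XX_lower (Q : ℕ) (hQ : 8 ≤ Q) (B : Set ℕ) (a : ℕ) : XP Q B a ≤ XX Q B :=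
  (summable_xt Q hQ B).sum_le_tsum _ fun i _ => xt_nonneg Q B i

theorem XX_upper (Q : ℕ) (hQ : 8 ≤ Q) (B : Set ℕ) (a : ℕ) :
    XX Q B ≤ XP Q B a + ((Q : ℝ) ^ a)⁻¹ * (1 / (Q - 1)) := by
  unfold XX XP
  rw [← (summable_xt Q hQ B).sum_add_tsum_nat_add a]
  gcongr
  have h := hasSum_geoQ Q hQ a
  rw [← h.tsum_eq]
  refine Summable.tsum_le_tsum (fun i => xt_le Q B _) ?_ h.summable
  exact (summable_nat_add_iff a).2 (summable_xt Q hQ B)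

theorem geom_pow_le (p : ℕ) (hp : 2 ≤ p) (N : ℕ) : ∑ n ∈ Finset.range N, p ^ n ≤ p ^ N := by
  induction N with
  | zero => simp
  | succ n ih => rw [Finset.sum_range_succ, pow_succ]; nlinarith [Nat.mul_le_mul_left (p ^ n) hp]

theorem block4 (p Q m : ℕ) (hp : 2 ≤ p) (hQ : 8 ≤ Q)
    (hpQ : ∀ r s : ℕ, 0 < r → 0 < s → p ^ r ≠ Q ^ s) :
    ∃ L0 : ℕ, ∀ L ≥ L0, ∀ M a a' : ℕ, a < a' → Q ^ a ≤ Q * p ^ M → p ^ (M + L) ≤ Q ^ a' → ∀ B : Set ℕ,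
      ∃ B' : Set ℕ, (∀ i ≤ a, (i ∈ B' ↔ i ∈ B)) ∧ ∀ B'' : Set ℕ, (∀ i < a', (i ∈ B'' ↔ i ∈ B')) →
        ∀ h : ℕ, 0 < h → h ≤ m →
        ‖∑ n ∈ Finset.Ico M (M + L), ee (h * (p : ℝ) ^ n * XX Q B'')‖ ≤ L / (m + 1) := by
  have hm1 : (0 : ℝ) < m + 1 := by positivity
  have hQ' : (8 : ℝ) ≤ Q := by exact_mod_cast hQ
  have hpi := Real.pi_pos
  obtain ⟨L1, hL1⟩ := block3 p Q m hp hQ hpQ (1 / (2 * (m + 1))) (by positivity)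
  obtain ⟨L2, hL2⟩ := exists_nat_ge (2 * (m + 1) * (2 * Real.pi * m))
  refine ⟨max L1 L2, fun L hL M a a' haa ha ha' B => ?_⟩
  obtain ⟨S, hS, hgood⟩ := hL1 L ((le_max_left _ _).trans hL) M a a' ha ha' (XP Q B (a + 1))
  refine ⟨{i | (i ≤ a ∧ i ∈ B) ∨ i ∈ S}, ?_, ?_⟩
  · intro i hi
    have : i ∉ S := fun h => by have := Finset.mem_Ico.1 (hS h); omega
    simp [hi, this]
  · intro B'' hB'' h h0 hm
    have hXP : XP Q B'' a' = XP Q B (a + 1) + ∑ k ∈ S, ((Q : ℝ) ^ (k + 1))⁻¹ := by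
      unfold XP
      rw [← Finset.sum_range_add_sum_Ico _ (show a + 1 ≤ a' by omega)]
      congr 1
      · refine Finset.sum_congr rfl fun i hi => ?_
        rw [Finset.mem_range] at hi
        have h1 := hB'' i (by omega)
        have : i ∉ S := fun h => by have := Finset.mem_Ico.1 (hS h); omega
        have h2 : i ∈ B'' ↔ i ∈ B := by
          rw [h1]; simp [this]; omega
        unfold xt
        simp only [h2]
      · rw [← Finset.sum_subset hS (f := xt Q B'')]
        · refine Finset.sum_congr rfl fun i hi => ?_
          have hi' := Finset.mem_Ico.1 (hS hi)
          have h1 : i ∈ B'' := (hB'' i hi'.2).2 (Or.inr hi)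
          simp [xt, h1]
        · intro i hi hiS
          have hi' := Finset.mem_Ico.1 hi
          have h1 : i ∉ B'' := by
            rw [hB'' i hi'.2]
            simp [hiS]; omega
          simp [xt, h1]
    have h1 := hgood h h0 hm
    rw [← hXP] at h1
    have htail : |XX Q B'' - XP Q B'' a'| ≤ ((Q : ℝ) ^ a')⁻¹ := by
      have h2 := XX_lower Q hQ B'' a'
      have h3 := XX_upper Q hQ B'' a'
      rw [abs_of_nonneg (by linarith)]
      have : ((Q : ℝ) ^ a')⁻¹ * (1 / (Q - 1)) ≤ ((Q : ℝ) ^ a')⁻¹ := by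
        apply mul_le_of_le_one_right (by positivity)
        rw [div_le_one (by linarith)]; linarith
      linarith
    have hdiff : ‖∑ n ∈ Finset.Ico M (M + L), ee (h * (p : ℝ) ^ n * XX Q B'') -
        ∑ n ∈ Finset.Ico M (M + L), ee (h * (p : ℝ) ^ n * XP Q B'' a')‖ ≤ 2 * Real.pi * m := by
      rw [← Finset.sum_sub_distrib]
      have hterm : ∀ n ∈ Finset.Ico M (M + L), ‖ee (h * (p : ℝ) ^ n * XX Q B'') - ee (h * (p : ℝ) ^ n * XP Q B'' a')‖
          ≤ 2 * Real.pi * m * ((Q : ℝ) ^ a')⁻¹ * (p : ℝ) ^ n := by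
        intro n _
        refine (ee_sub_le _ _).trans ?_
        rw [← mul_sub, abs_mul, abs_of_nonneg (by positivity : (0 : ℝ) ≤ h * (p : ℝ) ^ n)]
        have hhm : (h : ℝ) ≤ m := by exact_mod_cast hm
        calc 2 * Real.pi * (h * (p : ℝ) ^ n * |XX Q B'' - XP Q B'' a'|)
            ≤ 2 * Real.pi * (m * (p : ℝ) ^ n * ((Q : ℝ) ^ a')⁻¹) := by gcongr
          _ = _ := by ring
      refine (norm_sum_le_of_le _ hterm).trans ?_
      rw [← Finset.mul_sum]
      have h5 : ∑ n ∈ Finset.Ico M (M + L), (p : ℝ) ^ n ≤ (Q : ℝ) ^ a' := by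
        have : ∑ n ∈ Finset.Ico M (M + L), p ^ n ≤ Q ^ a' := by
          refine le_trans ?_ ((geom_pow_le p hp (M + L)).trans ha')
          apply Finset.sum_le_sum_of_subset
          intro n; simp
        exact_mod_cast this
      calc 2 * Real.pi * m * ((Q : ℝ) ^ a')⁻¹ * ∑ n ∈ Finset.Ico M (M + L), (p : ℝ) ^ n
          ≤ 2 * Real.pi * m * ((Q : ℝ) ^ a')⁻¹ * (Q : ℝ) ^ a' := by gcongr
        _ = 2 * Real.pi * m := by field_simp
    have hfin : 2 * Real.pi * m ≤ L / (2 * (m + 1)) := by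
      rw [le_div_iff₀ (by positivity)]
      have : (L2 : ℝ) ≤ L := by exact_mod_cast (le_max_right _ _).trans hL
      linarith
    have htri := norm_le_norm_add_norm_sub' (∑ n ∈ Finset.Ico M (M + L), ee (h * (p : ℝ) ^ n * XX Q B''))
      (∑ n ∈ Finset.Ico M (M + L), ee (h * (p : ℝ) ^ n * XP Q B'' a'))
    have e : (L : ℝ) / (m + 1) = 1 / (2 * (m + 1)) * L + L / (2 * (m + 1)) := by field_simp; ring
    rw [e]
    linarith


/-- The abstract tree construction. -/
theorem tree (a : ℕ → ℕ) (ha : StrictMono a) (Good : ℕ → ℕ → Set ℕ → Prop)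
    (hmono : ∀ j m m' B, m ≤ m' → Good j m' B → Good j m B)
    (hstep : ∀ m, ∃ j0, ∀ j ≥ j0, ∀ B : Set ℕ, ∃ B' : Set ℕ, (∀ i ≤ a j, (i ∈ B' ↔ i ∈ B)) ∧
      ∀ B'' : Set ℕ, (∀ i < a (j + 1), (i ∈ B'' ↔ i ∈ B')) → Good j m B'') :
    ∃ Φ : Set ℕ → Set ℕ, Function.Injective Φ ∧ ∀ s m, ∃ j0, ∀ j ≥ j0, Good j m (Φ s) := by
  let R : ℕ → Set ℕ → ℕ → Set ℕ → Prop := fun j B m B' => (∀ i ≤ a j, (i ∈ B' ↔ i ∈ B)) ∧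
      ∀ B'' : Set ℕ, (∀ i < a (j + 1), (i ∈ B'' ↔ i ∈ B')) → Good j m B''
  have hch : ∀ j B, ∃ B', (∀ i ≤ a j, (i ∈ B' ↔ i ∈ B)) ∧ ∀ m ≤ j, (∃ C, R j B m C) → R j B m B' := by
    intro j B
    by_cases h0 : ∃ m ≤ j, ∃ C, R j B m C
    · obtain ⟨m1, hm1, hC1⟩ := h0
      have hs := Nat.findGreatest_spec (P := fun m => ∃ C, R j B m C) hm1 hC1
      obtain ⟨C, hC⟩ := hs
      refine ⟨C, hC.1, fun m hm hex => ⟨hC.1, fun B'' hB'' => ?_⟩⟩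
      have hle := Nat.le_findGreatest (P := fun m => ∃ C, R j B m C) hm hex
      exact hmono j _ _ B'' hle (hC.2 B'' hB'')
    · refine ⟨B, fun _ _ => Iff.rfl, fun m hm hex => absurd ⟨m, hm, hex⟩ h0⟩
  choose F hF1 hF2 using hch
  -- the state after j stages
  let st : Set ℕ → ℕ → Set ℕ := fun s j =>
    Nat.rec (∅ : Set ℕ) (fun j B => F j {i | (i < a j ∧ i ∈ B) ∨ (i = a j ∧ j ∈ s)}) j
  let pre : Set ℕ → ℕ → Set ℕ := fun s j => {i | (i < a j ∧ i ∈ st s j) ∨ (i = a j ∧ j ∈ s)}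
  have hst : ∀ s j, st s (j + 1) = F j (pre s j) := fun s j => rfl
  have hag1 : ∀ s j, ∀ i < a j, (i ∈ st s (j + 1) ↔ i ∈ st s j) := by
    intro s j i hi
    rw [hst, hF1 j _ i hi.le]
    simp only [pre, Set.mem_ofPred_eq]
    constructor
    · rintro (h | h)
      · exact h.2
      · omega
    · intro h; exact Or.inl ⟨hi, h⟩
  have hag2 : ∀ s j, (a j ∈ st s (j + 1) ↔ j ∈ s) := by
    intro s j
    rw [hst, hF1 j _ _ le_rfl]
    simp [pre]
  have hag : ∀ s j k, j ≤ k → ∀ i < a j, (i ∈ st s k ↔ i ∈ st s j) := by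
    intro s j k hjk
    induction k, hjk using Nat.le_induction with
    | base => intro i _; rfl
    | succ k hk ih =>
      intro i hi
      rw [hag1 s k i (lt_of_lt_of_le hi (ha.monotone hk)), ih i hi]
  have hid : ∀ i, i < a (i + 1) := fun i => lt_of_lt_of_le (Nat.lt_succ_self i) (ha.id_le (i + 1))
  let Φ : Set ℕ → Set ℕ := fun s => {i | i ∈ st s (i + 1)}
  have hΦ : ∀ s j, ∀ i < a j, (i ∈ Φ s ↔ i ∈ st s j) := by
    intro s j i hi
    change i ∈ st s (i + 1) ↔ _
    rcases le_total (i + 1) j with h | h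
    · exact (hag s _ _ h i (hid i)).symm
    · exact hag s _ _ h i hi
  refine ⟨Φ, ?_, ?_⟩
  · intro s t hst'
    ext j
    rw [← hag2 s j, ← hag2 t j, ← hΦ s (j + 1) (a j) (ha (Nat.lt_succ_self j)),
      ← hΦ t (j + 1) (a j) (ha (Nat.lt_succ_self j)), hst']
  · intro s m
    obtain ⟨j0, hj0⟩ := hstep m
    refine ⟨max j0 m, fun j hj => ?_⟩
    have h1 := hF2 j (pre s j) m ((le_max_right _ _).trans hj) (hj0 j ((le_max_left _ _).trans hj) _)
    apply h1.2
    intro i hi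
    rw [← hst]
    exact hΦ s (j + 1) i hi


theorem exists_family (p Q : ℕ) (hp : 2 ≤ p) (hQ : 8 ≤ Q)
    (hpQ : ∀ r s : ℕ, 0 < r → 0 < s → p ^ r ≠ Q ^ s) :
    ∃ Φ : Set ℕ → Set ℕ, Function.Injective Φ ∧ ∀ s m, ∃ j0, ∀ j ≥ j0, ∀ h : ℕ, 0 < h → h ≤ m →
      ‖∑ n ∈ Finset.Ico (Q * j ^ 2) (Q * j ^ 2 + Q * (2 * j + 1)), ee (h * (p : ℝ) ^ n * XX Q (Φ s))‖
        ≤ ((Q * (2 * j + 1) : ℕ) : ℝ) / (m + 1) := by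
  have hlow : ∀ j : ℕ, Q ^ Nat.clog Q (p ^ (Q * j ^ 2)) ≤ Q * p ^ (Q * j ^ 2) := by
    intro j
    rcases Nat.eq_zero_or_pos j with rfl | hj
    · simp; omega
    · have h1 : 1 < p ^ (Q * j ^ 2) := Nat.one_lt_pow (by positivity) (by omega)
      have h2 := Nat.pow_pred_clog_lt_self (b := Q) (by omega) h1
      have h3 : 0 < Nat.clog Q (p ^ (Q * j ^ 2)) := Nat.clog_pos (by omega) h1
      obtain ⟨k, hk⟩ := Nat.exists_eq_succ_of_ne_zero h3.ne'
      rw [hk] at h2 ⊢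
      rw [Nat.pred_succ] at h2
      rw [Nat.succ_eq_add_one, pow_succ, mul_comm]
      exact Nat.mul_le_mul_left _ h2.le
  have hN : ∀ j : ℕ, Q * j ^ 2 + Q * (2 * j + 1) = Q * (j + 1) ^ 2 := fun j => by ring
  have hmono : StrictMono (fun j : ℕ => Nat.clog Q (p ^ (Q * j ^ 2))) := by
    refine strictMono_nat_of_lt_succ fun j => ?_
    rw [Nat.lt_clog_iff_pow_lt (by omega)]
    refine (hlow j).trans_lt ?_
    have h1 : Q < p ^ Q := Nat.lt_pow_self (by omega)
    calc Q * p ^ (Q * j ^ 2) < p ^ Q * p ^ (Q * j ^ 2) := Nat.mul_lt_mul_of_pos_right h1 (by positivity)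
      _ = p ^ (Q * j ^ 2 + Q) := by ring
      _ ≤ p ^ (Q * (j + 1) ^ 2) := by
        apply Nat.pow_le_pow_right (by omega)
        rw [← hN]
        nlinarith
  refine tree (fun j => Nat.clog Q (p ^ (Q * j ^ 2))) hmono
    (fun j m B => ∀ h : ℕ, 0 < h → h ≤ m →
      ‖∑ n ∈ Finset.Ico (Q * j ^ 2) (Q * j ^ 2 + Q * (2 * j + 1)), ee (h * (p : ℝ) ^ n * XX Q B)‖
        ≤ ((Q * (2 * j + 1) : ℕ) : ℝ) / (m + 1)) ?_ ?_
  · intro j m m' B hmm hG h h0 hm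
    refine (hG h h0 (hm.trans hmm)).trans ?_
    gcongr
  · intro m
    obtain ⟨L0, hL0⟩ := block4 p Q m hp hQ hpQ
    refine ⟨L0, fun j hj B => ?_⟩
    refine hL0 (Q * (2 * j + 1)) (by nlinarith) (Q * j ^ 2) _ _ (hmono (Nat.lt_succ_self j)) (hlow j) ?_ B
    rw [hN]
    exact Nat.le_pow_clog (by omega) _

theorem weyl_of_blocks (c : ℕ) (hc : 0 < c) (f : ℕ → ℂ) (hf : ∀ n, ‖f n‖ ≤ 1)
    (hb : ∀ m : ℕ, ∃ j0, ∀ j ≥ j0, ‖∑ n ∈ Finset.Ico (c * j ^ 2) (c * j ^ 2 + c * (2 * j + 1)), f n‖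
        ≤ ((c * (2 * j + 1) : ℕ) : ℝ) / (m + 1)) :
    Tendsto (fun N : ℕ => (∑ n ∈ Finset.range N, f n) / (N : ℂ)) atTop (𝓝 0) := by
  rw [Metric.tendsto_atTop]
  intro ε hε
  set δ := ε / 4 with hδ
  have hδ0 : 0 < δ := by positivity
  obtain ⟨m, hm⟩ := exists_nat_one_div_lt hδ0
  obtain ⟨j0, hj0⟩ := hb m
  have htriv : ∀ a b : ℕ, ‖∑ n ∈ Finset.Ico a b, f n‖ ≤ (b - a : ℕ) := by
    intro a b
    refine (norm_sum_le_of_le _ (fun n _ => hf n)).trans ?_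
    simp
  have hU : ∀ j ≥ j0, ‖∑ n ∈ Finset.range (c * j ^ 2), f n‖ ≤ c * (j0 : ℝ) ^ 2 + δ * (c * (j : ℝ) ^ 2) := by
    intro j hj
    induction j, hj using Nat.le_induction with
    | base =>
      have := htriv 0 (c * j0 ^ 2)
      rw [← Finset.range_eq_Ico] at this
      push_cast [Nat.sub_zero] at this
      have h2 : 0 ≤ δ * (c * (j0 : ℝ) ^ 2) := by positivity
      linarith
    | succ j hj ih =>
      have e : c * (j + 1) ^ 2 = c * j ^ 2 + c * (2 * j + 1) := by ring
      rw [e, ← Finset.sum_range_add_sum_Ico _ (Nat.le_add_right (c * j ^ 2) _)]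
      refine (norm_add_le _ _).trans ?_
      have h1 := hj0 j hj
      have h2 : ((c * (2 * j + 1) : ℕ) : ℝ) / (m + 1) ≤ δ * ((c * (2 * j + 1) : ℕ) : ℝ) := by
        rw [div_eq_mul_one_div, mul_comm]
        gcongr
      push_cast at h1 h2 ⊢
      nlinarith
  obtain ⟨K1, hK1⟩ := exists_nat_ge (3 / δ)
  obtain ⟨K2, hK2⟩ := exists_nat_ge ((j0 : ℝ) ^ 2 / δ)
  set K := j0 + K1 + K2 + 1 with hK
  refine ⟨c * K ^ 2, fun N hN => ?_⟩
  rw [dist_zero_right, norm_div, Complex.norm_natCast]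
  have hN0 : 0 < N := lt_of_lt_of_le (by positivity) hN
  rw [div_lt_iff₀ (by exact_mod_cast hN0)]
  set j := Nat.sqrt (N / c) with hj
  have hjK : K ≤ j := by
    rw [hj, Nat.le_sqrt', Nat.le_div_iff_mul_le hc]; linarith
  have hj1 : c * j ^ 2 ≤ N := by
    have h1 : j ^ 2 ≤ N / c := Nat.sqrt_le' _
    rw [Nat.le_div_iff_mul_le hc] at h1; linarith
  have hj2 : N < c * (j + 1) ^ 2 := by
    have h1 : N / c < (j + 1) ^ 2 := Nat.lt_succ_sqrt' _
    rw [Nat.div_lt_iff_lt_mul hc] at h1; linarith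
  have h1 := hU j (by omega)
  have h2 := htriv (c * j ^ 2) N
  rw [← Finset.sum_range_add_sum_Ico _ hj1]
  refine (norm_add_le _ _).trans_lt ?_
  have h3 : ((N - c * j ^ 2 : ℕ) : ℝ) ≤ c * (2 * j + 1) := by
    have : N - c * j ^ 2 ≤ c * (2 * j + 1) := by
      have e : c * (j + 1) ^ 2 = c * j ^ 2 + c * (2 * j + 1) := by ring
      omega
    exact_mod_cast this
  have hj1' : (c : ℝ) * (j : ℝ) ^ 2 ≤ N := by exact_mod_cast hj1
  have hc' : (0 : ℝ) < c := by exact_mod_cast hc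
  have hjj1 : (1 : ℝ) ≤ j := by exact_mod_cast (by omega : 1 ≤ j)
  have h4 : 3 ≤ δ * j := by
    rw [div_le_iff₀ hδ0] at hK1
    have : (K1 : ℝ) ≤ j := by exact_mod_cast (by omega : K1 ≤ j)
    nlinarith
  have h5 : (j0 : ℝ) ^ 2 ≤ δ * j := by
    rw [div_le_iff₀ hδ0] at hK2
    have : (K2 : ℝ) ≤ j := by exact_mod_cast (by omega : K2 ≤ j)
    nlinarith
  have h6 : (2 * j + 1 : ℝ) ≤ δ * (j : ℝ) ^ 2 := by nlinarith
  have h7 : (j0 : ℝ) ^ 2 ≤ δ * (j : ℝ) ^ 2 := by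
    have : δ * j ≤ δ * (j : ℝ) ^ 2 := by
      apply mul_le_mul_of_nonneg_left _ hδ0.le; nlinarith
    linarith
  have h8 := mul_le_mul_of_nonneg_left h6 hc'.le
  have h9 := mul_le_mul_of_nonneg_left h7 hc'.le
  have h10 := mul_le_mul_of_nonneg_left hj1' hδ0.le
  have hNpos : (0 : ℝ) < N := by exact_mod_cast hN0
  have h11 : ε * N = 4 * (δ * N) := by rw [hδ]; ring
  have h12 : 0 < δ * N := by positivity
  rw [h11]
  nlinarith

theorem fourier_eq_ee (k : ℤ) (t : ℝ) : fourier k ((t : ℝ) : UnitAddCircle) = ee (k * t) := by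
  rw [fourier_coe_apply]
  unfold ee
  congr 1
  push_cast
  simp
  ring

theorem normal_of_blocks (p Q : ℕ) (hp : 2 ≤ p) (hQ : 8 ≤ Q) (x : ℝ) (hx : 0 ≤ x)
    (hG : ∀ m : ℕ, ∃ j0, ∀ j ≥ j0, ∀ h : ℕ, 0 < h → h ≤ m →
      ‖∑ n ∈ Finset.Ico (Q * j ^ 2) (Q * j ^ 2 + Q * (2 * j + 1)), ee (h * (p : ℝ) ^ n * x)‖
        ≤ ((Q * (2 * j + 1) : ℕ) : ℝ) / (m + 1)) : IsNormal p x := by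
  apply normal_of_weyl p hp x hx
  intro k hk
  apply weyl_of_blocks Q (by omega)
  · intro n
    rw [fourier_eq_ee, ee_norm]
  · intro m
    obtain ⟨j0, hj0⟩ := hG (max m k.natAbs)
    refine ⟨j0, fun j hj => ?_⟩
    have h1 := hj0 j hj k.natAbs (Int.natAbs_pos.2 hk) (le_max_right _ _)
    have h2 : ((Q * (2 * j + 1) : ℕ) : ℝ) / ((max m k.natAbs : ℕ) + 1) ≤ ((Q * (2 * j + 1) : ℕ) : ℝ) / (m + 1) := by
      gcongr
      exact le_max_left _ _
    refine le_trans (le_of_eq ?_) (h1.trans h2)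
    rcases Int.natAbs_eq k with hk' | hk'
    · congr 1
      refine Finset.sum_congr rfl fun n _ => ?_
      rw [fourier_eq_ee]
      have : (k : ℝ) = (k.natAbs : ℝ) := by
        have := congrArg (Int.cast : ℤ → ℝ) hk'
        exact this.trans (by rw [Int.cast_natCast])
      rw [this]; congr 1; ring
    · rw [← Complex.norm_conj, map_sum]
      congr 1
      refine Finset.sum_congr rfl fun n _ => ?_
      rw [fourier_eq_ee, ee_conj]
      have : (k : ℝ) = -(k.natAbs : ℝ) := by
        have := congrArg (Int.cast : ℤ → ℝ) hk'
        exact this.trans (by rw [Int.cast_neg, Int.cast_natCast])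
      rw [this]; congr 1; ring


noncomputable def YY (Q : ℕ) (B : Set ℕ) : ℕ → ℕ
  | 0 => 0
  | i + 1 => Q * YY Q B i + if i ∈ B then 1 else 0

theorem XP_eq (Q : ℕ) (hQ : 8 ≤ Q) (B : Set ℕ) (i : ℕ) : XP Q B i * (Q : ℝ) ^ i = YY Q B i := by
  induction i with
  | zero => simp [XP, YY]
  | succ i ih =>
    have hQ0 : (Q : ℝ) ≠ 0 := by positivity
    unfold XP at ih ⊢
    rw [Finset.sum_range_succ, YY, add_mul, pow_succ, ← mul_assoc, ih]
    push_cast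
    congr 1
    · ring
    · unfold xt
      split_ifs
      · rw [pow_succ]; field_simp
      · simp

theorem floor_aux (Q : ℕ) (hQ : 8 ≤ Q) (B : Set ℕ) (i t : ℕ) (ht : t < Q - 1) :
    ⌊XX Q B * ((Q : ℝ) ^ i * t)⌋ = ((YY Q B i * t : ℕ) : ℤ) := by
  have hQ' : (8 : ℝ) ≤ Q := by exact_mod_cast hQ
  have h1 := XX_lower Q hQ B i
  have h2 := XX_upper Q hQ B i
  have h3 := XP_eq Q hQ B i
  have hQi : (0 : ℝ) < (Q : ℝ) ^ i := by positivity
  have ht' : (t : ℝ) < Q - 1 := by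
    have : t + 1 < Q := by omega
    have : (t : ℝ) + 1 < Q := by exact_mod_cast this
    linarith
  rw [Int.floor_eq_iff]
  push_cast
  rw [← h3]
  constructor
  · have : XP Q B i * ((Q : ℝ) ^ i * t) ≤ XX Q B * ((Q : ℝ) ^ i * t) := by gcongr
    linarith
  · have h4 : XX Q B * ((Q : ℝ) ^ i * t) ≤ (XP Q B i + ((Q : ℝ) ^ i)⁻¹ * (1 / (Q - 1))) * ((Q : ℝ) ^ i * t) := by
      gcongr
    have h5 : (XP Q B i + ((Q : ℝ) ^ i)⁻¹ * (1 / (Q - 1))) * ((Q : ℝ) ^ i * t) =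
        XP Q B i * (Q : ℝ) ^ i * t + t / (Q - 1) := by
      have : (Q : ℝ) - 1 ≠ 0 := by linarith
      field_simp
    have h6 : (t : ℝ) / (Q - 1) < 1 := by
      rw [div_lt_one (by linarith)]; exact ht'
    linarith

theorem XX_inj (Q : ℕ) (hQ : 8 ≤ Q) : Function.Injective (XX Q) := by
  intro B C h
  have hY : ∀ i, YY Q B i = YY Q C i := by
    intro i
    have h1 := floor_aux Q hQ B i 1 (by omega)
    have h2 := floor_aux Q hQ C i 1 (by omega)
    rw [h, h2] at h1
    have := Int.ofNat_inj.1 h1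
    omega
  ext i
  have h1 := hY (i + 1)
  rw [YY, YY, hY i] at h1
  split_ifs at h1 with h2 h3 h3 <;> simp_all

theorem XX_mem (Q : ℕ) (hQ : 8 ≤ Q) (B : Set ℕ) : XX Q B ∈ Set.Ico (0 : ℝ) 1 := by
  have hQ' : (8 : ℝ) ≤ Q := by exact_mod_cast hQ
  have h1 := XX_lower Q hQ B 0
  have h2 := XX_upper Q hQ B 0
  simp only [XP, Finset.range_zero, Finset.sum_empty, pow_zero, inv_one, one_mul, zero_add] at h1 h2
  refine ⟨h1, h2.trans_lt ?_⟩
  rw [div_lt_one (by linarith)]; linarith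

theorem not_simply_normal (q : ℕ) (hq : 2 ≤ q) (B : Set ℕ) : ¬ IsSimplyNormal q (XX (q ^ 3) B) := by
  have hQ : 8 ≤ q ^ 3 := by
    calc 8 = 2 ^ 3 := by norm_num
      _ ≤ q ^ 3 := Nat.pow_le_pow_left hq 3
  have hlt2 : q ^ 2 < q ^ 3 - 1 := by
    have : 4 ≤ q ^ 2 := by nlinarith
    have : q ^ 3 = q * q ^ 2 := by ring
    have : 2 * q ^ 2 ≤ q * q ^ 2 := Nat.mul_le_mul_right _ hq
    omega
  have hlt1 : q < q ^ 3 - 1 := lt_of_le_of_lt (by nlinarith) hlt2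
  have d0 : ∀ i, qdigit q (XX (q ^ 3) B) (3 * i) = 0 := by
    intro i
    unfold qdigit
    have := floor_aux (q ^ 3) hQ B i q hlt1
    have e : (q : ℝ) ^ (3 * i + 1) = ((q ^ 3 : ℕ) : ℝ) ^ i * (q : ℝ) := by
      push_cast; rw [← pow_mul, pow_succ]
    rw [e, this, Int.toNat_natCast, Nat.mul_mod_left]
  have d1 : ∀ i, qdigit q (XX (q ^ 3) B) (3 * i + 1) = 0 := by
    intro i
    unfold qdigit
    have := floor_aux (q ^ 3) hQ B i (q ^ 2) hlt2
    have e : (q : ℝ) ^ (3 * i + 1 + 1) = ((q ^ 3 : ℕ) : ℝ) ^ i * ((q ^ 2 : ℕ) : ℝ) := by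
      push_cast; rw [← pow_mul]; ring
    rw [e, this, Int.toNat_natCast]
    rw [show YY (q ^ 3) B i * q ^ 2 = YY (q ^ 3) B i * q * q by ring, Nat.mul_mod_left]
  intro hS
  have h0 := hS 0 (by omega)
  have hsub : Tendsto (fun K : ℕ => 3 * (K + 1)) atTop atTop :=
    tendsto_atTop_mono (fun K => by simp only [id]; omega) tendsto_id
  have h1 := h0.comp hsub
  have hcount : ∀ K : ℕ, 2 * K ≤ ((Finset.range (3 * K)).filter fun n => qdigit q (XX (q ^ 3) B) n = 0).card := by
    intro K
    induction K with
    | zero => simp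
    | succ K ih =>
      have e : 3 * (K + 1) = 3 * K + 1 + 1 + 1 := by ring
      rw [e, Finset.range_add_one, Finset.range_add_one, Finset.range_add_one]
      have hle := Finset.card_le_card (Finset.filter_subset_filter (fun n => qdigit q (XX (q ^ 3) B) n = 0)
        (Finset.subset_insert (3 * K + 1 + 1) (insert (3 * K + 1) (insert (3 * K) (Finset.range (3 * K))))))
      refine le_trans ?_ hle
      rw [Finset.filter_insert, if_pos (d1 K), Finset.filter_insert, if_pos (d0 K),
        Finset.card_insert_of_notMem, Finset.card_insert_of_notMem]
      · omega
      · simp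
      · simp
  have h2 : (2 / 3 : ℝ) ≤ (q : ℝ)⁻¹ := by
    refine ge_of_tendsto' h1 fun K => ?_
    simp only [Function.comp]
    have := hcount (K + 1)
    have h3 : ((2 * (K + 1) : ℕ) : ℝ) ≤ (((Finset.range (3 * (K + 1))).filter fun n => qdigit q (XX (q ^ 3) B) n = 0).card : ℝ) := by
      exact_mod_cast this
    rw [le_div_iff₀ (by positivity)]
    push_cast at h3 ⊢
    linarith
  have h3 : (q : ℝ)⁻¹ ≤ 2⁻¹ := by
    gcongr
    exact_mod_cast hq
  norm_num at h2 h3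
  linarith

theorem schmidt_inequivalent_bases (p q : ℕ) (hp : 2 ≤ p) (hq : 2 ≤ q)
    (hpq : ∀ r s : ℕ, 0 < r → 0 < s → p ^ r ≠ q ^ s) :
    Cardinal.mk
      ({x : ℝ | x ∈ Set.Ico (0 : ℝ) 1 ∧ IsNormal p x ∧ ¬ IsSimplyNormal q x}) =
      Cardinal.continuum := by
  have hQ : 8 ≤ q ^ 3 := by
    calc 8 = 2 ^ 3 := by norm_num
      _ ≤ q ^ 3 := Nat.pow_le_pow_left hq 3
  obtain ⟨Φ, hinj, hΦ⟩ := exists_family p (q ^ 3) hp hQ (fun r s hr hs => by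
    rw [← pow_mul]; exact hpq r (3 * s) hr (by omega))
  apply le_antisymm
  · rw [← Cardinal.mk_real]
    exact Cardinal.mk_set_le _
  · have e : Cardinal.continuum = Cardinal.mk (Set ℕ) := by simp
    rw [e]
    refine Cardinal.mk_le_of_injective (f := fun s : Set ℕ =>
      (⟨XX (q ^ 3) (Φ s), XX_mem _ hQ _,
        normal_of_blocks p (q ^ 3) hp hQ _ (XX_mem _ hQ _).1 (hΦ s), not_simply_normal q hq _⟩ :
        {x : ℝ | x ∈ Set.Ico (0 : ℝ) 1 ∧ IsNormal p x ∧ ¬ IsSimplyNormal q x})) ?_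
    intro s t hst
    exact hinj (XX_inj _ hQ (Subtype.ext_iff.1 hst))
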